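/- arXiv:1603.09218 — 2 statements merged into one kernel-verified Lean document; each statement's English description precedes it below -/
import Mathlib

section
/- The family of monomials Q₁^{a₁}Q₂^{a₂}R^{ε}P₁^{b₁}P₂^{b₂}, with ε ∈ {0,1}, a₁, b₁ ∈ ℕ₀ and a₂, b₂ ∈ ℤ (negative exponents interpreted via the inverse generators), is a ℂ-vector-space basis of the algebra 𝒜. -/
noncomputable section

/-- Generators of the algebra `𝒜`: `P₁, P₂, P₂⁻¹, Q₁, Q₂, Q₂⁻¹, R`. -/
inductive AGen : Type
  | P1 | P2 | P2i | Q1 | Q2 | Q2i | R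

abbrev FA : Type := FreeAlgebra ℂ AGen

def gA : AGen → FA := FreeAlgebra.ι ℂ

/-- The defining relations of the algebra `𝒜`. -/
inductive ARel (q t : ℂ) : FA → FA → Prop
  | P2P2i : ARel q t (gA .P2 * gA .P2i) 1
  | P2iP2 : ARel q t (gA .P2i * gA .P2) 1
  | Q2Q2i : ARel q t (gA .Q2 * gA .Q2i) 1
  | Q2iQ2 : ARel q t (gA .Q2i * gA .Q2) 1
  | P2P1 : ARel q t (gA .P2 * gA .P1) (gA .P1 * gA .P2)
  | Q2Q1 : ARel q t (gA .Q2 * gA .Q1) (gA .Q1 * gA .Q2)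
  | P2Q2 : ARel q t (gA .P2 * gA .Q2) ((q⁻¹ ^ 4) • (gA .Q2 * gA .P2))
  | P2Q1 : ARel q t (gA .P2 * gA .Q1) ((q⁻¹ ^ 2) • (gA .Q1 * gA .P2))
  | P1Q2 : ARel q t (gA .P1 * gA .Q2) ((q⁻¹ ^ 2) • (gA .Q2 * gA .P1))
  | P1Q1 : ARel q t (gA .P1 * gA .Q1)
      (gA .Q1 * gA .P1 + (q⁻¹ ^ 2 - 1) • gA .R)
  | P2R : ARel q t (gA .P2 * gA .R) ((q⁻¹ ^ 2) • (gA .R * gA .P2))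
  | RQ2 : ARel q t (gA .R * gA .Q2) ((q⁻¹ ^ 2) • (gA .Q2 * gA .R))
  | P1R : ARel q t (gA .P1 * gA .R)
      ((q⁻¹ ^ 2) • (gA .R * gA .P1) + (1 - q⁻¹ ^ 2) • (gA .Q1 * gA .P2))
  | RQ1 : ARel q t (gA .R * gA .Q1)
      ((q⁻¹ ^ 2) • (gA .Q1 * gA .R) + (1 - q⁻¹ ^ 2) • (gA .Q2 * gA .P1))
  | RR : ARel q t (gA .R * gA .R)
      (((1 + t ^ 2) * (q⁻¹ ^ 2 + t⁻¹ ^ 2)) • (gA .Q2 * gA .P2)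
        - (q⁻¹ ^ 2) • (gA .Q2 * gA .P1 * gA .P1)
        - (q⁻¹ ^ 2) • (gA .Q1 * gA .Q1 * gA .P2)
        + (q⁻¹ ^ 2) • (gA .Q1 * gA .R * gA .P1))

/-- The algebra `𝒜`. -/
abbrev AlgA (q t : ℂ) : Type := RingQuot (ARel q t)

variable (q t : ℂ)

def P1 : AlgA q t := RingQuot.mkAlgHom ℂ (ARel q t) (gA .P1)
def P2 : AlgA q t := RingQuot.mkAlgHom ℂ (ARel q t) (gA .P2)
def P2i : AlgA q t := RingQuot.mkAlgHom ℂ (ARel q t) (gA .P2i)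
def Q1 : AlgA q t := RingQuot.mkAlgHom ℂ (ARel q t) (gA .Q1)
def Q2 : AlgA q t := RingQuot.mkAlgHom ℂ (ARel q t) (gA .Q2)
def Q2i : AlgA q t := RingQuot.mkAlgHom ℂ (ARel q t) (gA .Q2i)
def R : AlgA q t := RingQuot.mkAlgHom ℂ (ARel q t) (gA .R)

/-- Integer powers of an element `x` with designated inverse `xi`:
negative exponents are interpreted via the inverse generator. -/
def zp {M : Type*} [Monoid M] (x xi : M) : ℤ → M
  | Int.ofNat n => x ^ n
  | Int.negSucc n => xi ^ (n + 1)

/-- The PBW family `Q₁^{a₁}Q₂^{a₂}R^{ε}P₁^{b₁}P₂^{b₂}` of `𝒜`, indexed by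
`a₁, b₁ ∈ ℕ`, `a₂, b₂ ∈ ℤ`, `ε ∈ {0,1}`. -/
def pbwA (q t : ℂ) : ℕ × ℤ × Fin 2 × ℕ × ℤ → AlgA q t :=
  fun x => Q1 q t ^ x.1 * zp (Q2 q t) (Q2i q t) x.2.1 * R q t ^ (x.2.2.1 : ℕ) *
    P1 q t ^ x.2.2.2.1 * zp (P2 q t) (P2i q t) x.2.2.2.2

/-!
Let `V` be the free module on the formal monomials `Q₁^a Q₂^b R^s P₁^m P₂^d`. If the monomials
are to be a basis of `𝒜`, then left multiplication dictates how the generators act on `V`, and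
conversely it suffices to check that these operators satisfy the defining relations: then `𝒜`
acts on `V`, the linear map `V → 𝒜` evaluating formal monomials is equivariant, and `y ↦ y • 1` is
its inverse.

The operators `P₁` and `R` are entangled, since moving either of them past `Q₁` produces the other.
They are therefore defined by a joint recursion on the exponent of `Q₁`, and their relations with
the other generators are verified in pairs, by induction on that exponent.
-/

theorem zp_units {M : Type*} [Monoid M] (u : Mˣ) (n : ℤ) :
    zp (u : M) (u⁻¹ : Mˣ) n = (u ^ n : Mˣ) := by
  cases n with
  | ofNat n => simp [zp]
  | negSucc n => simp [zp, zpow_negSucc]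

theorem map_zp {M N F : Type*} [Monoid M] [Monoid N] [FunLike F M N] [MonoidHomClass F M N]
    (f : F) (x xi : M) (n : ℤ) : f (zp x xi n) = zp (f x) (f xi) n := by
  cases n <;> simp [zp]

theorem mul_zpow_eq_smul_zpow_mul {K A : Type*} [CommSemiring K] [Semiring A] [Algebra K A]
    {p : Kˣ} {z : A} {u : Aˣ} (h : z * u = p.val • (u * z)) (n : ℤ) :
    z * (u ^ n).val = (p ^ n).val • ((u ^ n).val * z) := by
  have hsemi : SemiconjBy z (u : A) (Units.map (algebraMap K A) p * u : Aˣ) := by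
    simpa [SemiconjBy, Algebra.smul_def, mul_assoc] using h
  have hcomm : Commute (Units.map (algebraMap K A : K →* A) p) u :=
    Units.ext (Algebra.commutes _ _)
  simpa [SemiconjBy, hcomm.mul_zpow, ← map_zpow, Algebra.smul_def, mul_assoc] using
    hsemi.units_zpow_right n

theorem map_zpow_smul_of_map_smul {G H α β : Type*} [Group G] [Group H] [MulAction G α]
    [MulAction H β] {f : α → β} {g : G} {h : H} (hf : ∀ x, f (g • x) = h • f x) (n : ℤ) (x : α) :
    f (g ^ n • x) = h ^ n • f x := by
  have hinv (x : α) : f (g⁻¹ • x) = h⁻¹ • f x := by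
    rw [eq_inv_smul_iff, ← hf, smul_inv_smul]
  induction n generalizing x with
  | zero => simp
  | succ n ih => rw [zpow_add_one, zpow_add_one, mul_smul, mul_smul, ih, hf]
  | pred n ih => rw [zpow_sub_one, zpow_sub_one, mul_smul, mul_smul, ih, hinv]

theorem zpow_smul_eq_of_smul_eq_succ {G α : Type*} [Group G] [MulAction G α] {g : G} {f : ℤ → α}
    (h : ∀ n, g • f n = f (n + 1)) (n : ℤ) : g ^ n • f 0 = f n := by
  induction n with
  | zero => simp
  | succ n ih => rw [add_comm, zpow_one_add, mul_smul, ih, h, add_comm]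
  | pred n ih =>
    rw [sub_eq_neg_add, zpow_add, zpow_neg_one, mul_smul, ih, inv_smul_eq_iff, h, add_comm (-1),
      neg_add_cancel_right]

section

variable {K A : Type*} [CommRing K] [Ring A] [Algebra K A]

variable (K) in
/-- The free module on the formal monomials `Q₁^a Q₂^b R^s P₁^m P₂^d`, indexed by the exponents
`(a, b, s, m, d)`. It will carry the left regular representation of `𝒜`. -/
def PBWModule : Type _ := (ℕ × ℤ × Fin 2 × ℕ × ℤ) →₀ K

namespace PBWModule

instance : AddCommGroup (PBWModule K) :=
  inferInstanceAs (AddCommGroup ((ℕ × ℤ × Fin 2 × ℕ × ℤ) →₀ K))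

instance : Module K (PBWModule K) :=
  inferInstanceAs (Module K ((ℕ × ℤ × Fin 2 × ℕ × ℤ) →₀ K))

/-- The formal monomial `Q₁^a Q₂^b R^s P₁^m P₂^d`. -/
def mon (a : ℕ) (b : ℤ) (s : Fin 2) (m : ℕ) (d : ℤ) : PBWModule K :=
  Finsupp.single (a, b, s, m, d) 1

variable {M : Type*} [AddCommGroup M] [Module K M]

/-- The linear map with prescribed values on the formal monomials. -/
def linearOfMon (f : ℕ → ℤ → Fin 2 → ℕ → ℤ → M) : PBWModule K →ₗ[K] M :=
  Finsupp.linearCombination K fun i => f i.1 i.2.1 i.2.2.1 i.2.2.2.1 i.2.2.2.2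

@[simp]
theorem linearOfMon_mon (f : ℕ → ℤ → Fin 2 → ℕ → ℤ → M) (a b s m d) :
    linearOfMon f (mon a b s m d : PBWModule K) = f a b s m d :=
  (Finsupp.linearCombination_single K 1 _).trans (one_smul K _)

theorem hom_ext {f g : PBWModule K →ₗ[K] M}
    (h : ∀ a b s m d, f (mon a b s m d) = g (mon a b s m d)) : f = g :=
  Finsupp.lhom_ext' fun ⟨a, b, s, m, d⟩ => LinearMap.ext_ring (h a b s m d)

/-- Left multiplication by `Q₁` on formal monomials. -/
def opQ₁ : Module.End K (PBWModule K) := linearOfMon fun a b s m d => mon (a + 1) b s m d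

@[simp]
theorem opQ₁_mon (a b s m d) :
    opQ₁ (mon a b s m d : PBWModule K) = mon (a + 1) b s m d :=
  linearOfMon_mon ..

theorem hom_ext_of_opQ₁ {f g : PBWModule K →ₗ[K] M}
    (zero : ∀ b s m d, f (mon 0 b s m d) = g (mon 0 b s m d))
    (step : ∀ v, f v = g v → f (opQ₁ v) = g (opQ₁ v)) : f = g := by
  refine hom_ext fun a b s m d => ?_
  induction a with
  | zero => exact zero b s m d
  | succ a ih => simpa only [opQ₁_mon] using step _ ih

theorem hom_pair_ext_of_opQ₁ {f g f' g' : PBWModule K →ₗ[K] M}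
    (zero : ∀ b s m d, f (mon 0 b s m d) = g (mon 0 b s m d) ∧
      f' (mon 0 b s m d) = g' (mon 0 b s m d))
    (step : ∀ v, f v = g v → f' v = g' v → f (opQ₁ v) = g (opQ₁ v) ∧ f' (opQ₁ v) = g' (opQ₁ v)) :
    f = g ∧ f' = g' := by
  have hprod : f.prod f' = g.prod g' :=
    hom_ext_of_opQ₁ (fun b s m d => Prod.ext_iff.2 (zero b s m d)) fun v hv =>
      Prod.ext_iff.2 (step v (congrArg Prod.fst hv) (congrArg Prod.snd hv))
  exact ⟨LinearMap.ext fun v => congrArg Prod.fst (LinearMap.congr_fun hprod v),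
    LinearMap.ext fun v => congrArg Prod.snd (LinearMap.congr_fun hprod v)⟩

/-- Left multiplication by `Q₂` on formal monomials. -/
def opQ₂ : (Module.End K (PBWModule K))ˣ where
  val := linearOfMon fun a b s m d => mon a (b + 1) s m d
  inv := linearOfMon fun a b s m d => mon a (b - 1) s m d
  val_inv := hom_ext fun a b s m d => by simp
  inv_val := hom_ext fun a b s m d => by simp

@[simp]
theorem opQ₂_mon (a b s m d) :
    opQ₂.val (mon a b s m d : PBWModule K) = mon a (b + 1) s m d := by
  simp [opQ₂]

theorem opQ₂_opQ₁ (v : PBWModule K) : opQ₂.val (opQ₁ v) = opQ₁ (opQ₂.val v) :=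
  LinearMap.congr_fun (f := opQ₂.val * opQ₁) (g := opQ₁ * opQ₂.val)
    (hom_ext fun a b s m d => by simp) v

/-- The scalar produced by moving `P₂` to the right past `Q₁^a Q₂^b R^s`, where `p` stands
for `q⁻²`. -/
def weight (p : Kˣ) (a : ℕ) (b : ℤ) (s : Fin 2) : Kˣ := p ^ a * (p ^ b) ^ 2 * p ^ (s : ℕ)

/-- Left multiplication by `P₂` on formal monomials, where `p` stands for `q⁻²`. -/
def opP₂ (p : Kˣ) : (Module.End K (PBWModule K))ˣ where
  val := linearOfMon fun a b s m d => (weight p a b s).val • mon a b s m (d + 1)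
  inv := linearOfMon fun a b s m d => (weight p a b s)⁻¹.val • mon a b s m (d - 1)
  val_inv := hom_ext fun a b s m d => by simp [smul_smul]
  inv_val := hom_ext fun a b s m d => by simp [smul_smul]

@[simp]
theorem opP₂_mon (p : Kˣ) (a b s m d) : (opP₂ p).val (mon a b s m d) =
    (p.val ^ a * (p ^ b).val ^ 2 * p.val ^ (s : ℕ)) • mon a b s m (d + 1) := by
  simp [opP₂, weight]

/-- The left multiples by `P₁` and by `R` of a formal monomial, where `p` stands for `q⁻²` and `c`
for the coefficient of `Q₂P₂` in `R²`. For `a = 0` the scalar `p ^ b` comes from moving `P₁` or `R`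
past `Q₂^b`; the case `a + 1` applies the relations for `P₁Q₁` and `RQ₁`. -/
def actP₁R (p : Kˣ) (c : K) : ℕ → ℤ → Fin 2 → ℕ → ℤ → PBWModule K × PBWModule K
  | 0, b, 0, m, d => ((p ^ b).val • mon 0 b 0 (m + 1) d, (p ^ b).val • mon 0 b 1 m d)
  | 0, b, 1, m, d =>
    ((p ^ b).val • (p.val • mon 0 b 1 (m + 1) d + (1 - p.val) • mon 1 b 0 m (d + 1)),
      (p ^ b).val • (c • mon 0 (b + 1) 0 m (d + 1) - p.val • mon 0 (b + 1) 0 (m + 2) d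
        - p.val • mon 2 b 0 m (d + 1) + p.val • mon 1 b 1 (m + 1) d))
  | a + 1, b, s, m, d =>
    (opQ₁ (actP₁R p c a b s m d).1 + (p.val - 1) • (actP₁R p c a b s m d).2,
      p.val • opQ₁ (actP₁R p c a b s m d).2 + (1 - p.val) • opQ₂.val (actP₁R p c a b s m d).1)

/-- Left multiplication by `P₁` on formal monomials. -/
def opP₁ (p : Kˣ) (c : K) : Module.End K (PBWModule K) :=
  linearOfMon fun a b s m d => (actP₁R p c a b s m d).1

/-- Left multiplication by `R` on formal monomials. -/
def opR (p : Kˣ) (c : K) : Module.End K (PBWModule K) :=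
  linearOfMon fun a b s m d => (actP₁R p c a b s m d).2

variable (p : Kˣ) (c : K)

theorem opP₁_mon_zero_zero (b m d) :
    opP₁ p c (mon 0 b 0 m d) = (p ^ b).val • mon 0 b 0 (m + 1) d :=
  linearOfMon_mon ..

theorem opR_mon_zero_zero (b m d) :
    opR p c (mon 0 b 0 m d) = (p ^ b).val • mon 0 b 1 m d :=
  linearOfMon_mon ..

theorem opP₁_mon_zero_one (b m d) : opP₁ p c (mon 0 b 1 m d) =
    (p ^ b).val • (p.val • mon 0 b 1 (m + 1) d + (1 - p.val) • mon 1 b 0 m (d + 1)) :=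
  linearOfMon_mon ..

theorem opR_mon_zero_one (b m d) : opR p c (mon 0 b 1 m d) =
    (p ^ b).val • (c • mon 0 (b + 1) 0 m (d + 1) - p.val • mon 0 (b + 1) 0 (m + 2) d
      - p.val • mon 2 b 0 m (d + 1) + p.val • mon 1 b 1 (m + 1) d) :=
  linearOfMon_mon ..

theorem opP₁_opQ₁ (v : PBWModule K) :
    opP₁ p c (opQ₁ v) = opQ₁ (opP₁ p c v) + (p.val - 1) • opR p c v :=
  LinearMap.congr_fun (f := opP₁ p c * opQ₁) (g := opQ₁ * opP₁ p c + (p.val - 1) • opR p c)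
    (hom_ext fun a b s m d => by simp [opP₁, opR, actP₁R]) v

theorem opR_opQ₁ (v : PBWModule K) :
    opR p c (opQ₁ v) = p.val • opQ₁ (opR p c v) + (1 - p.val) • opQ₂.val (opP₁ p c v) :=
  LinearMap.congr_fun (f := opR p c * opQ₁)
    (g := p.val • (opQ₁ * opR p c) + (1 - p.val) • (opQ₂.val * opP₁ p c))
    (hom_ext fun a b s m d => by simp [opP₁, opR, actP₁R]) v

theorem opP₂_opQ₁ (v : PBWModule K) :
    (opP₂ p).val (opQ₁ v) = p.val • opQ₁ ((opP₂ p).val v) :=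
  LinearMap.congr_fun (f := (opP₂ p).val * opQ₁) (g := p.val • (opQ₁ * (opP₂ p).val))
    (hom_ext fun a b s m d => by
      simp only [Module.End.mul_apply, LinearMap.smul_apply, opQ₁_mon, opP₂_mon, map_smul]
      module) v

theorem opP₂_opQ₂ (v : PBWModule K) :
    (opP₂ p).val (opQ₂.val v) = (p.val ^ 2) • opQ₂.val ((opP₂ p).val v) :=
  LinearMap.congr_fun (f := (opP₂ p).val * opQ₂.val) (g := p.val ^ 2 • (opQ₂.val * (opP₂ p).val))
    (hom_ext fun a b s m d => by
      simp only [Module.End.mul_apply, LinearMap.smul_apply, opQ₂_mon, opP₂_mon, map_smul,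
        zpow_add_one, Units.val_mul]
      module) v

theorem opP₁_opR_mul_opQ₂ : opP₁ p c * opQ₂.val = p.val • (opQ₂.val * opP₁ p c) ∧
    opR p c * opQ₂.val = p.val • (opQ₂.val * opR p c) := by
  refine hom_pair_ext_of_opQ₁ (fun b s m d => ?_) fun v hP hR => ?_
  · fin_cases s <;>
      simp only [Fin.zero_eta, Fin.mk_one, Module.End.mul_apply, LinearMap.smul_apply,
        opP₁_mon_zero_zero, opP₁_mon_zero_one, opR_mon_zero_zero, opR_mon_zero_one, opQ₂_mon,
        map_add, map_sub, map_smul, zpow_add_one, Units.val_mul] <;>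
      constructor <;> module
  · simp only [Module.End.mul_apply, LinearMap.smul_apply] at hP hR ⊢
    simp only [opQ₂_opQ₁, opP₁_opQ₁, opR_opQ₁, hP, hR, map_add, map_smul]
    constructor <;> module

theorem opP₁_opQ₂ (v : PBWModule K) :
    opP₁ p c (opQ₂.val v) = p.val • opQ₂.val (opP₁ p c v) :=
  LinearMap.congr_fun (opP₁_opR_mul_opQ₂ p c).1 v

theorem opR_opQ₂ (v : PBWModule K) :
    opR p c (opQ₂.val v) = p.val • opQ₂.val (opR p c v) :=
  LinearMap.congr_fun (opP₁_opR_mul_opQ₂ p c).2 v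

theorem opP₂_mul_opP₁_opR : (opP₂ p).val * opP₁ p c = opP₁ p c * (opP₂ p).val ∧
    (opP₂ p).val * opR p c = p.val • (opR p c * (opP₂ p).val) := by
  refine hom_pair_ext_of_opQ₁ (fun b s m d => ?_) fun v hP hR => ?_
  · fin_cases s <;>
      simp only [Fin.zero_eta, Fin.mk_one, Fin.val_zero, Fin.val_one, Module.End.mul_apply,
        LinearMap.smul_apply, opP₁_mon_zero_zero, opP₁_mon_zero_one, opR_mon_zero_zero,
        opR_mon_zero_one, opP₂_mon, map_add, map_sub, map_smul, zpow_add_one, Units.val_mul] <;>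
      constructor <;> module
  · simp only [Module.End.mul_apply, LinearMap.smul_apply] at hP hR ⊢
    simp only [opP₁_opQ₁, opR_opQ₁, opP₂_opQ₁, opP₂_opQ₂, hP, hR, map_add, map_smul]
    constructor <;> module

theorem opP₁_opR_mul_opR :
    opP₁ p c * opR p c = p.val • (opR p c * opP₁ p c) + (1 - p.val) • (opQ₁ * (opP₂ p).val) ∧
    opR p c * opR p c = c • (opQ₂.val * (opP₂ p).val) - p.val • (opQ₂.val * opP₁ p c * opP₁ p c)
      - p.val • (opQ₁ * opQ₁ * (opP₂ p).val) + p.val • (opQ₁ * opR p c * opP₁ p c) := by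
  have mon_one (b s m d) : (mon 1 b s m d : PBWModule K) = opQ₁ (mon 0 b s m d) := by simp
  have mon_two (b s m d) : (mon 2 b s m d : PBWModule K) = opQ₁ (opQ₁ (mon 0 b s m d)) := by simp
  refine hom_pair_ext_of_opQ₁ (fun b s m d => ?_) fun v hP hR => ?_
  · fin_cases s <;>
      simp only [Fin.zero_eta, Fin.mk_one, Fin.val_zero, Fin.val_one, Module.End.mul_apply,
        LinearMap.add_apply, LinearMap.sub_apply, LinearMap.smul_apply, opP₁_mon_zero_zero,
        opP₁_mon_zero_one, opR_mon_zero_zero, opR_mon_zero_one, opP₂_mon, mon_one, mon_two,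
        opP₁_opQ₁, opR_opQ₁, opQ₂_opQ₁, opQ₂_mon, map_add, map_sub, map_smul, zpow_add_one,
        Units.val_mul, smul_add, smul_sub] <;>
      constructor <;> module
  · simp only [Module.End.mul_apply, LinearMap.add_apply, LinearMap.sub_apply,
      LinearMap.smul_apply] at hP hR ⊢
    simp only [opP₁_opQ₁, opR_opQ₁, opP₂_opQ₁, opP₁_opQ₂, opR_opQ₂, opQ₂_opQ₁, hP, hR, map_add,
      map_sub, map_smul, smul_add, smul_sub]
    constructor <;> module

end PBWModule

/-- Elements of an algebra satisfying the defining relations of `𝒜`, with `q⁻²` replaced by a unit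
`p` of an arbitrary commutative ring and the coefficient of `Q₂P₂` in `R²` by an arbitrary `c`. The
invertible generators are bundled with their inverses as units. -/
structure Realization (p : Kˣ) (c : K) (A : Type*) [Ring A] [Algebra K A] where
  (P₁ : A) (P₂ : Aˣ) (Q₁ : A) (Q₂ : Aˣ) (R : A)
  P₂_mul_P₁ : P₂ * P₁ = P₁ * P₂
  Q₂_mul_Q₁ : Q₂ * Q₁ = Q₁ * Q₂
  P₂_mul_Q₂ : P₂.val * Q₂ = p.val ^ 2 • (Q₂.val * P₂)
  P₂_mul_Q₁ : P₂ * Q₁ = p.val • (Q₁ * P₂)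
  P₁_mul_Q₂ : P₁ * Q₂ = p.val • (Q₂ * P₁)
  P₁_mul_Q₁ : P₁ * Q₁ = Q₁ * P₁ + (p.val - 1) • R
  P₂_mul_R : P₂ * R = p.val • (R * P₂)
  R_mul_Q₂ : R * Q₂ = p.val • (Q₂ * R)
  P₁_mul_R : P₁ * R = p.val • (R * P₁) + (1 - p.val) • (Q₁ * P₂)
  R_mul_Q₁ : R * Q₁ = p.val • (Q₁ * R) + (1 - p.val) • (Q₂ * P₁)
  R_mul_R : R * R = c • (Q₂.val * P₂) - p.val • (Q₂ * P₁ * P₁) - p.val • (Q₁ * Q₁ * P₂)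
    + p.val • (Q₁ * R * P₁)

/-- The monomial `Q₁^a Q₂^b R^s P₁^m P₂^d` in a realization, for `i = (a, b, s, m, d)`. -/
def Realization.monomial {p : Kˣ} {c : K} (x : Realization p c A)
    (i : ℕ × ℤ × Fin 2 × ℕ × ℤ) : A :=
  x.Q₁ ^ i.1 * (x.Q₂ ^ i.2.1).val * x.R ^ (i.2.2.1 : ℕ) * x.P₁ ^ i.2.2.2.1 *
    (x.P₂ ^ i.2.2.2.2).val

namespace PBWModule

/-- The realization on formal monomials by left multiplication. -/
def leftRegular (p : Kˣ) (c : K) : Realization p c (Module.End K (PBWModule K)) where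
  P₁ := opP₁ p c
  P₂ := opP₂ p
  Q₁ := opQ₁
  Q₂ := opQ₂
  R := opR p c
  P₂_mul_P₁ := (opP₂_mul_opP₁_opR p c).1
  Q₂_mul_Q₁ := LinearMap.ext opQ₂_opQ₁
  P₂_mul_Q₂ := LinearMap.ext (opP₂_opQ₂ p)
  P₂_mul_Q₁ := LinearMap.ext (opP₂_opQ₁ p)
  P₁_mul_Q₂ := (opP₁_opR_mul_opQ₂ p c).1
  P₁_mul_Q₁ := LinearMap.ext (opP₁_opQ₁ p c)
  P₂_mul_R := (opP₂_mul_opP₁_opR p c).2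
  R_mul_Q₂ := (opP₁_opR_mul_opQ₂ p c).2
  P₁_mul_R := (opP₁_opR_mul_opR p c).1
  R_mul_Q₁ := LinearMap.ext (opR_opQ₁ p c)
  R_mul_R := (opP₁_opR_mul_opR p c).2

theorem opQ₂_zpow_mon_zero (b s m d) :
    (opQ₂ ^ b).val (mon 0 0 s m d : PBWModule K) = mon 0 b s m d :=
  zpow_smul_eq_of_smul_eq_succ (g := (opQ₂ : (Module.End K (PBWModule K))ˣ))
    (f := fun b => (mon 0 b s m d : PBWModule K)) (opQ₂_mon 0 · s m d) b

theorem opP₂_zpow_mon_zero (p : Kˣ) (d : ℤ) :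
    (opP₂ p ^ d).val (mon 0 0 0 0 0) = mon 0 0 0 0 d :=
  zpow_smul_eq_of_smul_eq_succ (g := opP₂ p) (f := (mon 0 0 0 0 : ℤ → PBWModule K))
    (fun d => (opP₂_mon p 0 0 0 0 d).trans (by simp)) d

theorem opP₁_pow_mon_zero (p : Kˣ) (c : K) (m d) :
    (opP₁ p c ^ m) (mon 0 0 0 0 d) = mon 0 0 0 m d := by
  induction m with
  | zero => simp
  | succ m ih => simp [pow_succ', ih, opP₁_mon_zero_zero]

theorem opR_pow_mon_zero (p : Kˣ) (c : K) (s : Fin 2) (m d) :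
    (opR p c ^ (s : ℕ)) (mon 0 0 0 m d) = mon 0 0 s m d := by
  fin_cases s <;> simp [opR_mon_zero_zero]

theorem opQ₁_pow_mon_zero (a b s m d) :
    (opQ₁ ^ a) (mon 0 b s m d : PBWModule K) = mon a b s m d := by
  induction a with
  | zero => simp
  | succ a ih => simp [pow_succ', ih]

theorem leftRegular_monomial_mon_zero (p : Kˣ) (c : K) (a b s m d) :
    (leftRegular p c).monomial (a, b, s, m, d) (mon 0 0 0 0 0) = mon a b s m d := by
  simp only [Realization.monomial, leftRegular, Module.End.mul_apply, opP₂_zpow_mon_zero,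
    opP₁_pow_mon_zero, opR_pow_mon_zero, opQ₂_zpow_mon_zero, opQ₁_pow_mon_zero]

end PBWModule

namespace Realization

open PBWModule

variable {p : Kˣ} {c : K} (x : Realization p c A)

/-- The linear map evaluating formal monomials in a realization. -/
def eval : PBWModule K →ₗ[K] A := linearOfMon fun a b s m d => x.monomial (a, b, s, m, d)

theorem eval_mon (a b s m d) : x.eval (mon a b s m d) = x.monomial (a, b, s, m, d) :=
  linearOfMon_mon ..

theorem eval_mon_eq_mul (a b s m d) : x.eval (mon a b s m d) =
    x.Q₁ ^ a * ((x.Q₂ ^ b).val * (x.R ^ (s : ℕ) * (x.P₁ ^ m * (x.P₂ ^ d).val))) := by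
  simp [eval_mon, monomial, mul_assoc]

theorem eval_opQ₁ (v : PBWModule K) : x.eval (opQ₁ v) = x.Q₁ * x.eval v :=
  LinearMap.congr_fun (f := x.eval ∘ₗ opQ₁) (g := LinearMap.mulLeft K x.Q₁ ∘ₗ x.eval)
    (hom_ext fun a b s m d => by simp [eval_mon_eq_mul, pow_succ', mul_assoc]) v

theorem eval_opQ₂ (v : PBWModule K) : x.eval (opQ₂.val v) = x.Q₂ * x.eval v := by
  refine LinearMap.congr_fun (f := x.eval ∘ₗ opQ₂.val)
    (g := LinearMap.mulLeft K x.Q₂.val ∘ₗ x.eval) (hom_ext fun a b s m d => ?_) v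
  have hcomm : Commute x.Q₂.val (x.Q₁ ^ a) := Commute.pow_right x.Q₂_mul_Q₁ a
  simp [eval_mon_eq_mul, add_comm b, zpow_one_add, hcomm.left_comm, mul_assoc]

theorem eval_zpow {T : (Module.End K (PBWModule K))ˣ} {u : Aˣ}
    (h : ∀ v, x.eval (T.val v) = u * x.eval v) (n : ℤ) (v : PBWModule K) :
    x.eval ((T ^ n).val v) = (u ^ n).val * x.eval v :=
  map_zpow_smul_of_map_smul (f := (x.eval : PBWModule K → A)) (g := T) (h := u) h n v

theorem eval_apply_mon_zero {r : Kˣ} {T : Module.End K (PBWModule K)} {z : A}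
    (hT : T * opQ₂.val = r.val • (opQ₂.val * T)) (hz : z * x.Q₂ = r.val • (x.Q₂ * z)) {s m d}
    (h : x.eval (T (mon 0 0 s m d)) = z * x.eval (mon 0 0 s m d)) (b : ℤ) :
    x.eval (T (mon 0 b s m d)) = z * x.eval (mon 0 b s m d) := by
  rw [← opQ₂_zpow_mon_zero b]
  calc x.eval ((T * (opQ₂ ^ b).val : Module.End K (PBWModule K)) (mon 0 0 s m d))
      = (r ^ b).val • ((x.Q₂ ^ b).val * (z * x.eval (mon 0 0 s m d))) := by
        rw [mul_zpow_eq_smul_zpow_mul hT, LinearMap.smul_apply, Module.End.mul_apply, map_smul,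
          x.eval_zpow x.eval_opQ₂, h]
    _ = z * x.eval ((opQ₂ ^ b).val (mon 0 0 s m d)) := by
        rw [x.eval_zpow x.eval_opQ₂, ← mul_assoc z, mul_zpow_eq_smul_zpow_mul hz, smul_mul_assoc,
          mul_assoc]

theorem P₂_mul_P₁_pow_mul_zpow (m : ℕ) (d : ℤ) :
    x.P₂ * (x.P₁ ^ m * (x.P₂ ^ d).val) = x.P₁ ^ m * (x.P₂ ^ (d + 1)).val := by
  have hcomm : Commute x.P₂.val (x.P₁ ^ m) := Commute.pow_right x.P₂_mul_P₁ m
  rw [hcomm.left_comm, add_comm d, zpow_one_add, Units.val_mul]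

theorem eval_opP₂ (v : PBWModule K) : x.eval ((opP₂ p).val v) = x.P₂ * x.eval v := by
  refine LinearMap.congr_fun (f := x.eval ∘ₗ (opP₂ p).val)
    (g := LinearMap.mulLeft K x.P₂.val ∘ₗ x.eval) (hom_ext_of_opQ₁ (fun b s m d => ?_)
      fun v hv => ?_) v
  · refine x.eval_apply_mon_zero (r := p ^ 2) (leftRegular p c).P₂_mul_Q₂ x.P₂_mul_Q₂ ?_ b
    fin_cases s
    · simp [eval_mon_eq_mul, P₂_mul_P₁_pow_mul_zpow]
    · simp [eval_mon_eq_mul, ← P₂_mul_P₁_pow_mul_zpow, ← mul_assoc, x.P₂_mul_R]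
  · simp only [LinearMap.comp_apply, LinearMap.mulLeft_apply] at hv ⊢
    rw [opP₂_opQ₁, map_smul, eval_opQ₁, eval_opQ₁, hv, ← mul_assoc, ← mul_assoc, x.P₂_mul_Q₁,
      smul_mul_assoc]

theorem eval_opP₁_mon_zero_zero (s m d) :
    x.eval (opP₁ p c (mon 0 0 s m d)) = x.P₁ * x.eval (mon 0 0 s m d) := by
  fin_cases s
  · simp [opP₁_mon_zero_zero, eval_mon_eq_mul, pow_succ', mul_assoc]
  · simp [opP₁_mon_zero_one, eval_mon_eq_mul, pow_succ', ← P₂_mul_P₁_pow_mul_zpow, ← mul_assoc,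
      x.P₁_mul_R, add_mul]

theorem eval_opR_mon_zero_zero (s m d) :
    x.eval (opR p c (mon 0 0 s m d)) = x.R * x.eval (mon 0 0 s m d) := by
  fin_cases s
  · simp [opR_mon_zero_zero, eval_mon_eq_mul]
  · simp [opR_mon_zero_one, eval_mon_eq_mul, pow_succ', ← P₂_mul_P₁_pow_mul_zpow, ← mul_assoc,
      x.R_mul_R, add_mul, sub_mul]

theorem eval_opP₁_opR : x.eval ∘ₗ opP₁ p c = LinearMap.mulLeft K x.P₁ ∘ₗ x.eval ∧
    x.eval ∘ₗ opR p c = LinearMap.mulLeft K x.R ∘ₗ x.eval := by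
  refine hom_pair_ext_of_opQ₁ (fun b s m d => ⟨?_, ?_⟩) fun v hP hR => ?_
  · exact x.eval_apply_mon_zero (leftRegular p c).P₁_mul_Q₂ x.P₁_mul_Q₂
      (x.eval_opP₁_mon_zero_zero s m d) b
  · exact x.eval_apply_mon_zero (leftRegular p c).R_mul_Q₂ x.R_mul_Q₂
      (x.eval_opR_mon_zero_zero s m d) b
  · simp only [LinearMap.comp_apply, LinearMap.mulLeft_apply] at hP hR ⊢
    simp only [opP₁_opQ₁, opR_opQ₁, map_add, map_smul, eval_opQ₁, eval_opQ₂, hP, hR, ← mul_assoc,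
      x.P₁_mul_Q₁, x.R_mul_Q₁, add_mul, smul_mul_assoc, and_self]

theorem eval_opP₁ (v : PBWModule K) : x.eval (opP₁ p c v) = x.P₁ * x.eval v :=
  LinearMap.congr_fun x.eval_opP₁_opR.1 v

theorem eval_opR (v : PBWModule K) : x.eval (opR p c v) = x.R * x.eval v :=
  LinearMap.congr_fun x.eval_opP₁_opR.2 v

end Realization

end

/-- The scalar `q⁻²` as a unit. -/
def invSq {q : ℂ} (hq : q ≠ 0) : ℂˣ := (Units.mk0 q hq)⁻¹ ^ 2

@[simp]
theorem invSq_val {q : ℂ} (hq : q ≠ 0) : (invSq hq).val = q⁻¹ ^ 2 := rfl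

variable {q t : ℂ} (hq : q ≠ 0)

variable (t) in
/-- Realizations for the parameters `q` and `t` of the algebra `𝒜`. -/
abbrev RealizationAt (A : Type*) [Ring A] [Algebra ℂ A] :=
  Realization (invSq hq) ((1 + t ^ 2) * (q⁻¹ ^ 2 + t⁻¹ ^ 2)) A

variable (t) in
/-- The tautological realization of the relations, in `𝒜` itself. -/
def genericRealization : RealizationAt t hq (AlgA q t) where
  P₁ := P1 q t
  P₂ := ⟨P2 q t, P2i q t, by simpa [P2, P2i] using RingQuot.mkAlgHom_rel ℂ (@ARel.P2P2i q t),
    by simpa [P2i, P2] using RingQuot.mkAlgHom_rel ℂ (@ARel.P2iP2 q t)⟩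
  Q₁ := Q1 q t
  Q₂ := ⟨Q2 q t, Q2i q t, by simpa [Q2, Q2i] using RingQuot.mkAlgHom_rel ℂ (@ARel.Q2Q2i q t),
    by simpa [Q2i, Q2] using RingQuot.mkAlgHom_rel ℂ (@ARel.Q2iQ2 q t)⟩
  R := R q t
  P₂_mul_P₁ := by simpa [P2, P1] using RingQuot.mkAlgHom_rel ℂ (@ARel.P2P1 q t)
  Q₂_mul_Q₁ := by simpa [Q2, Q1] using RingQuot.mkAlgHom_rel ℂ (@ARel.Q2Q1 q t)
  P₂_mul_Q₂ := by simpa [P2, Q2, ← pow_mul] using RingQuot.mkAlgHom_rel ℂ (@ARel.P2Q2 q t)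
  P₂_mul_Q₁ := by simpa [P2, Q1] using RingQuot.mkAlgHom_rel ℂ (@ARel.P2Q1 q t)
  P₁_mul_Q₂ := by simpa [P1, Q2] using RingQuot.mkAlgHom_rel ℂ (@ARel.P1Q2 q t)
  P₁_mul_Q₁ := by simpa [P1, Q1, R] using RingQuot.mkAlgHom_rel ℂ (@ARel.P1Q1 q t)
  P₂_mul_R := by simpa [P2, R] using RingQuot.mkAlgHom_rel ℂ (@ARel.P2R q t)
  R_mul_Q₂ := by simpa [R, Q2] using RingQuot.mkAlgHom_rel ℂ (@ARel.RQ2 q t)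
  P₁_mul_R := by simpa [P1, R, Q1, P2] using RingQuot.mkAlgHom_rel ℂ (@ARel.P1R q t)
  R_mul_Q₁ := by simpa [R, Q1, Q2, P1] using RingQuot.mkAlgHom_rel ℂ (@ARel.RQ1 q t)
  R_mul_R := by simpa [R, Q1, Q2, P1, P2] using RingQuot.mkAlgHom_rel ℂ (@ARel.RR q t)

theorem monomial_genericRealization : (genericRealization t hq).monomial = pbwA q t := by
  funext i
  simp only [Realization.monomial, ← zp_units]
  rfl

namespace Realization

variable {hq} {A : Type*} [Ring A] [Algebra ℂ A] (x : RealizationAt t hq A)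

/-- The values of a realization on the generators, in the indexing of `AGen`. -/
def onGen : AGen → A
  | .P1 => x.P₁
  | .P2 => x.P₂
  | .P2i => x.P₂⁻¹.val
  | .Q1 => x.Q₁
  | .Q2 => x.Q₂
  | .Q2i => x.Q₂⁻¹.val
  | .R => x.R

@[simp]
theorem lift_onGen_gA (g : AGen) : FreeAlgebra.lift ℂ x.onGen (gA g) = x.onGen g :=
  FreeAlgebra.lift_ι_apply _ _

theorem lift_onGen_eq_of_rel {a b : FA} (h : ARel q t a b) :
    FreeAlgebra.lift ℂ x.onGen a = FreeAlgebra.lift ℂ x.onGen b := by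
  cases h with
  | P2Q2 => simpa [onGen, ← pow_mul] using x.P₂_mul_Q₂
  | _ => simp [onGen, x.P₂_mul_P₁, x.Q₂_mul_Q₁, x.P₂_mul_Q₁, x.P₁_mul_Q₂, x.P₁_mul_Q₁,
      x.P₂_mul_R, x.R_mul_Q₂, x.P₁_mul_R, x.R_mul_Q₁, x.R_mul_R]

/-- The algebra map out of `𝒜` determined by a realization. -/
def lift : AlgA q t →ₐ[ℂ] A :=
  RingQuot.liftAlgHom ℂ ⟨FreeAlgebra.lift ℂ x.onGen, fun _ _ => x.lift_onGen_eq_of_rel⟩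

@[simp]
theorem lift_mkAlgHom_gA (g : AGen) :
    x.lift (RingQuot.mkAlgHom ℂ (ARel q t) (gA g)) = x.onGen g := by
  simp [lift]

theorem lift_pbwA (i) : x.lift (pbwA q t i) = x.monomial i := by
  simp [pbwA, monomial, map_zp, ← zp_units, P1, P2, P2i, Q1, Q2, Q2i, _root_.R, onGen]

theorem lift_genericRealization (y : AlgA q t) : (genericRealization t hq).lift y = y := by
  have hid : (genericRealization t hq).lift = AlgHom.id ℂ (AlgA q t) :=
    RingQuot.ringQuot_ext' _ _ _ <| FreeAlgebra.hom_ext <| funext fun g => by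
      cases g <;> exact (genericRealization t hq).lift_mkAlgHom_gA _
  exact DFunLike.congr_fun hid y

end Realization

namespace PBWModule

variable (t) in
/-- The action of `𝒜` on formal monomials by left multiplication. -/
def regularRep : AlgA q t →ₐ[ℂ] Module.End ℂ (PBWModule ℂ) :=
  Realization.lift (leftRegular _ _ : RealizationAt t hq _)

theorem regularRep_pbwA_mon_zero (a b s m d) :
    regularRep t hq (pbwA q t (a, b, s, m, d)) (mon 0 0 0 0 0) = mon a b s m d := by
  rw [regularRep, Realization.lift_pbwA, leftRegular_monomial_mon_zero]

theorem eval_regularRep {A : Type*} [Ring A] [Algebra ℂ A] (x : RealizationAt t hq A)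
    (y : AlgA q t) (v : PBWModule ℂ) :
    x.eval (regularRep t hq y v) = x.lift y * x.eval v := by
  obtain ⟨a, rfl⟩ := RingQuot.mkAlgHom_surjective ℂ (ARel q t) y
  induction a using FreeAlgebra.induction generalizing v with
  | grade0 r => simp [Algebra.algebraMap_eq_smul_one]
  | grade1 g =>
    rw [← gA, regularRep, Realization.lift_mkAlgHom_gA, Realization.lift_mkAlgHom_gA]
    cases g with
    | P1 => exact x.eval_opP₁ v
    | P2 => exact x.eval_opP₂ v
    | P2i => simpa [Realization.onGen, leftRegular] using x.eval_zpow x.eval_opP₂ (-1) v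
    | Q1 => exact x.eval_opQ₁ v
    | Q2 => exact x.eval_opQ₂ v
    | Q2i => simpa [Realization.onGen, leftRegular] using x.eval_zpow x.eval_opQ₂ (-1) v
    | R => exact x.eval_opR v
  | mul a b ha hb => simp [ha, hb, mul_assoc]
  | add a b ha hb => simp [ha, hb, add_mul]

end PBWModule

variable (t) in
/-- The isomorphism from `𝒜` to the formal monomials given by acting on the formal monomial `1`;
its inverse is evaluation. -/
def pbwEquiv : AlgA q t ≃ₗ[ℂ] PBWModule ℂ :=
  LinearEquiv.ofLinearMap
    (LinearMap.applyₗ (PBWModule.mon 0 0 0 0 0) ∘ₗ (PBWModule.regularRep t hq).toLinearMap)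
    (genericRealization t hq).eval
    (PBWModule.hom_ext fun a b s m d => by
      simp [Realization.eval_mon, monomial_genericRealization,
        PBWModule.regularRep_pbwA_mon_zero])
    (LinearMap.ext fun y => by
      simp [PBWModule.eval_regularRep, Realization.lift_genericRealization, Realization.eval_mon,
        Realization.monomial])

variable (t) in
/-- The basis of `𝒜` corresponding to the formal monomials. -/
def pbwBasis : Module.Basis (ℕ × ℤ × Fin 2 × ℕ × ℤ) ℂ (AlgA q t) :=
  .ofRepr (pbwEquiv t hq)

theorem coe_pbwBasis : ⇑(pbwBasis t hq) = pbwA q t :=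
  funext fun i => ((genericRealization t hq).eval_mon ..).trans <|
    congrFun (monomial_genericRealization hq) i

/-- The family of monomials `Q₁^{a₁}Q₂^{a₂}R^{ε}P₁^{b₁}P₂^{b₂}`, with
`ε ∈ {0,1}`, `a₁, b₁ ∈ ℕ₀` and `a₂, b₂ ∈ ℤ` (negative exponents interpreted via the
inverse generators), is a ℂ-vector-space basis of the algebra `𝒜`. -/
theorem stmt5 (q t : ℂ) (hq : q ≠ 0) (ht : t ≠ 0) :
    LinearIndependent ℂ (pbwA q t) ∧
      Submodule.span ℂ (Set.range (pbwA q t)) = ⊤ := by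
  rw [← coe_pbwBasis hq]
  exact ⟨(pbwBasis t hq).linearIndependent, (pbwBasis t hq).span_eq⟩
end
end

section
/- The elements 𝑃₁ = e(X₁+X₂)e, 𝑃₂ = e(X₁X₂)e, 𝑄₁ = e(Y₁+Y₂)e, 𝑄₂ = e(Y₁Y₂)e and 𝑅 = e(t⁻²Y₁X₁+Y₂X₂)e of eH_{t,q}e, together with 𝑃₂⁻¹ = e(X₁X₂)⁻¹e and 𝑄₂⁻¹ = e(Y₁Y₂)⁻¹e, satisfy all the defining relations of 𝒜; consequently there is a ℂ-algebra homomorphism Φ: 𝒜 → eH_{t,q}e sending P₁, P₂, Q₁, Q₂, R to 𝑃₁, 𝑃₂, 𝑄₁, 𝑄₂, 𝑅 respectively. -/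
noncomputable section

/-- Generators of the double affine Hecke algebra of type GL₂:
`T, T⁻¹, X₁, X₁⁻¹, X₂, X₂⁻¹, Y₁, Y₁⁻¹, Y₂, Y₂⁻¹`. -/
inductive DGen : Type
  | T | Ti | X1 | X1i | X2 | X2i | Y1 | Y1i | Y2 | Y2i

abbrev FD : Type := FreeAlgebra ℂ DGen

def gD : DGen → FD := FreeAlgebra.ι ℂ

/-- The defining relations of the double affine Hecke algebra `H_{t,q}` of type GL₂. -/
inductive DRel (q t : ℂ) : FD → FD → Prop
  | TTi : DRel q t (gD .T * gD .Ti) 1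
  | TiT : DRel q t (gD .Ti * gD .T) 1
  | X1X1i : DRel q t (gD .X1 * gD .X1i) 1
  | X1iX1 : DRel q t (gD .X1i * gD .X1) 1
  | X2X2i : DRel q t (gD .X2 * gD .X2i) 1
  | X2iX2 : DRel q t (gD .X2i * gD .X2) 1
  | Y1Y1i : DRel q t (gD .Y1 * gD .Y1i) 1
  | Y1iY1 : DRel q t (gD .Y1i * gD .Y1) 1
  | Y2Y2i : DRel q t (gD .Y2 * gD .Y2i) 1
  | Y2iY2 : DRel q t (gD .Y2i * gD .Y2) 1
  | TX1T : DRel q t (gD .T * gD .X1 * gD .T) (gD .X2)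
  | TiY1Ti : DRel q t (gD .Ti * gD .Y1 * gD .Ti) (gD .Y2)
  | Xcomm : DRel q t (gD .X1 * gD .X2) (gD .X2 * gD .X1)
  | Ycomm : DRel q t (gD .Y1 * gD .Y2) (gD .Y2 * gD .Y1)
  | YXX : DRel q t (gD .Y1 * (gD .X1 * gD .X2)) ((q ^ 2) • (gD .X1 * gD .X2 * gD .Y1))
  | X1iY2 : DRel q t (gD .X1i * gD .Y2) (gD .Y2 * gD .X1i * gD .Ti * gD .Ti)
  | hecke : DRel q t ((gD .T + algebraMap ℂ FD t⁻¹) * (gD .T - algebraMap ℂ FD t)) 0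

/-- The double affine Hecke algebra `H_{t,q}` of type GL₂. -/
abbrev DAHA (q t : ℂ) : Type := RingQuot (DRel q t)

variable (q t : ℂ)

def T : DAHA q t := RingQuot.mkAlgHom ℂ (DRel q t) (gD .T)
def Ti : DAHA q t := RingQuot.mkAlgHom ℂ (DRel q t) (gD .Ti)
def X1 : DAHA q t := RingQuot.mkAlgHom ℂ (DRel q t) (gD .X1)
def X1i : DAHA q t := RingQuot.mkAlgHom ℂ (DRel q t) (gD .X1i)
def X2 : DAHA q t := RingQuot.mkAlgHom ℂ (DRel q t) (gD .X2)
def X2i : DAHA q t := RingQuot.mkAlgHom ℂ (DRel q t) (gD .X2i)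
def Y1 : DAHA q t := RingQuot.mkAlgHom ℂ (DRel q t) (gD .Y1)
def Y1i : DAHA q t := RingQuot.mkAlgHom ℂ (DRel q t) (gD .Y1i)
def Y2 : DAHA q t := RingQuot.mkAlgHom ℂ (DRel q t) (gD .Y2)
def Y2i : DAHA q t := RingQuot.mkAlgHom ℂ (DRel q t) (gD .Y2i)

variable (q t : ℂ)

/-- The symmetrizing idempotent `e = (1 + tT)/(1 + t²)` of the DAHA. -/
def eSym (q t : ℂ) : DAHA q t := ((1 + t ^ 2)⁻¹ : ℂ) • (1 + t • T q t)

def sP1 (q t : ℂ) : DAHA q t := eSym q t * (X1 q t + X2 q t) * eSym q t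
def sP2 (q t : ℂ) : DAHA q t := eSym q t * (X1 q t * X2 q t) * eSym q t
def sP2i (q t : ℂ) : DAHA q t := eSym q t * (X1i q t * X2i q t) * eSym q t
def sQ1 (q t : ℂ) : DAHA q t := eSym q t * (Y1 q t + Y2 q t) * eSym q t
def sQ2 (q t : ℂ) : DAHA q t := eSym q t * (Y1 q t * Y2 q t) * eSym q t
def sQ2i (q t : ℂ) : DAHA q t := eSym q t * (Y1i q t * Y2i q t) * eSym q t
def sR (q t : ℂ) : DAHA q t :=
  eSym q t * ((t⁻¹ ^ 2) • (Y1 q t * X1 q t) + Y2 q t * X2 q t) * eSym q t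

/-!
An element commuting with `T` slides through the symmetrizer `e`, so a product of compressions
`(e x e)(e y e)` collapses to `e x y e` as soon as `x` or `y` is symmetric. Since `Te = eT = te`,
a compression absorbs factors `T` on either side; in particular `R = (1 + t⁻²) e Y₁X₁ e`, and in
each relation one factor `Y₁ + Y₂` or `X₁ + X₂` may be replaced by a multiple of `Y₁` or `X₁`.
Reordering in `H` then expresses both sides of a relation through the elements `e y x e` with
`y`, `x` monomials in the `Yᵢ` and in the `Xᵢ`. Only in `R²` are both factors non-symmetric; there
`(1 + t⁻²) e y e = (t⁻² y + T y T⁻¹) e` replaces the middle idempotent. Half of the relations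
follow from the other half by Cherednik's duality.
-/

section Hecke

variable {K A : Type*} [Field K] [Ring A] [Algebra K A] {t : K}

theorem one_add_inv_sq_ne_zero (ht₀ : t ≠ 0) (ht : 1 + t ^ 2 ≠ 0) : 1 + t⁻¹ ^ 2 ≠ 0 := by
  have hdiv : 1 + t⁻¹ ^ 2 = (1 + t ^ 2) / t ^ 2 := by
    field_simp
    ring
  rw [hdiv]
  exact div_ne_zero ht (pow_ne_zero 2 ht₀)

/-- `T` is a generator of a Hecke algebra of rank one: it satisfies the quadratic relation with
eigenvalues `t` and `-t⁻¹`, for an invertible parameter `t`. -/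
structure IsHecke (t : K) (T : A) : Prop where
  ne_zero : t ≠ 0
  quadratic : (T + algebraMap K A t⁻¹) * (T - algebraMap K A t) = 0

/-- The idempotent `(1 + tT)/(1 + t²)` projecting onto the eigenvalue `t` of a Hecke generator `T`.
It is the junk value `0` when `t² = -1`. -/
def symmetrizer (t : K) (T : A) : A := (1 + t ^ 2)⁻¹ • (1 + t • T)

/-- The compression `x ↦ e x e` onto the spherical subalgebra `e A e`, where `e` is the symmetrizer
of `T`. -/
def sphericalPart (t : K) (T : A) : A →ₗ[K] A :=
  LinearMap.mulLeftRight K (symmetrizer t T, symmetrizer t T)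

theorem sphericalPart_apply (T x : A) :
    sphericalPart t T x = symmetrizer t T * x * symmetrizer t T := rfl

theorem sphericalPart_mem_corner (T x : A) :
    sphericalPart t T x ∈ Subsemigroup.corner (symmetrizer t T) :=
  ⟨x, rfl⟩

theorem commute_symmetrizer {T x : A} (h : Commute T x) : Commute (symmetrizer t T) x :=
  ((Commute.one_left x).add_left (h.smul_left t)).smul_left _

namespace IsHecke

section Generator

variable {T : A}

theorem mul_self (hT : IsHecke t T) : T * T = 1 + (t - t⁻¹) • T := by
  have h := hT.quadratic
  simp only [Algebra.algebraMap_eq_smul_one, add_mul, mul_sub, smul_mul_assoc, mul_smul_comm,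
    one_mul, mul_one, smul_add, smul_smul, mul_inv_cancel₀ hT.ne_zero] at h
  rw [← sub_eq_zero, ← h]
  module

theorem mul_symmetrizer (hT : IsHecke t T) : T * symmetrizer t T = t • symmetrizer t T := by
  have ht := hT.ne_zero
  simp only [symmetrizer, mul_smul_comm, mul_add, mul_one, hT.mul_self]
  match_scalars <;> field_simp
  ring

theorem symmetrizer_mul (hT : IsHecke t T) : symmetrizer t T * T = t • symmetrizer t T := by
  rw [(commute_symmetrizer (Commute.refl T)).eq, hT.mul_symmetrizer]

theorem isIdempotentElem_symmetrizer (hT : IsHecke t T) (ht : 1 + t ^ 2 ≠ 0) :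
    IsIdempotentElem (symmetrizer t T) := by
  calc symmetrizer t T * symmetrizer t T
      = (1 + t ^ 2)⁻¹ • (symmetrizer t T + t • (T * symmetrizer t T)) := by
        rw [symmetrizer, smul_mul_assoc, add_mul, one_mul, smul_mul_assoc]
    _ = (1 + t ^ 2)⁻¹ • (1 + t ^ 2) • symmetrizer t T := by
        rw [hT.mul_symmetrizer, smul_smul, ← pow_two, add_smul, one_smul]
    _ = symmetrizer t T := inv_smul_smul₀ ht _

theorem sphericalPart_mul_left (hT : IsHecke t T) (x : A) :
    sphericalPart t T (T * x) = t • sphericalPart t T x := by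
  simp only [sphericalPart_apply, ← mul_assoc, hT.symmetrizer_mul, smul_mul_assoc]

theorem sphericalPart_mul_right (hT : IsHecke t T) (x : A) :
    sphericalPart t T (x * T) = t • sphericalPart t T x := by
  simp only [sphericalPart_apply, mul_assoc, hT.mul_symmetrizer, mul_smul_comm]

theorem sphericalPart_mul_of_commute_left (hT : IsHecke t T) (ht : 1 + t ^ 2 ≠ 0) {x : A}
    (hx : Commute T x) (y : A) :
    sphericalPart t T x * sphericalPart t T y = sphericalPart t T (x * y) := by
  have he := hT.isIdempotentElem_symmetrizer ht
  simp only [sphericalPart_apply]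
  rw [mul_assoc _ x, ← (commute_symmetrizer hx).eq, ← mul_assoc _ _ x, he.eq]
  simp only [← mul_assoc]
  rw [(commute_symmetrizer hx).eq, mul_assoc x, he.eq]

theorem sphericalPart_mul_of_commute_right (hT : IsHecke t T) (ht : 1 + t ^ 2 ≠ 0) (x : A) {y : A}
    (hy : Commute T y) :
    sphericalPart t T x * sphericalPart t T y = sphericalPart t T (x * y) := by
  have he := hT.isIdempotentElem_symmetrizer ht
  simp only [sphericalPart_apply]
  rw [(commute_symmetrizer hy).eq, mul_assoc y, he.eq, mul_assoc _ _ (y * _), ← mul_assoc _ y,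
    (commute_symmetrizer hy).eq, mul_assoc y, he.eq]
  simp only [mul_assoc]

theorem sphericalPart_mul_of_semiconjBy (hT : IsHecke t T) (ht : 1 + t ^ 2 ≠ 0) {z x : A} {c : K}
    (hz : Commute T z) (h : SemiconjBy z x (c • x)) :
    sphericalPart t T z * sphericalPart t T x
      = c • (sphericalPart t T x * sphericalPart t T z) := by
  rw [hT.sphericalPart_mul_of_commute_left ht hz, hT.sphericalPart_mul_of_commute_right ht x hz,
    h.eq, smul_mul_assoc, map_smul]

end Generator

variable {T : Aˣ}

theorem inv_eq (hT : IsHecke t (T : A)) : (↑T⁻¹ : A) = T - (t - t⁻¹) • 1 := by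
  refine Units.inv_eq_of_mul_eq_one_right ?_
  rw [mul_sub, hT.mul_self, mul_smul_comm, mul_one, add_sub_cancel_right]

theorem inv (hT : IsHecke t (T : A)) : IsHecke t⁻¹ (↑T⁻¹ : A) where
  ne_zero := inv_ne_zero hT.ne_zero
  quadratic := by
    have ht := hT.ne_zero
    simp only [hT.inv_eq, Algebra.algebraMap_eq_smul_one, mul_sub, add_mul, sub_mul, hT.mul_self,
      smul_mul_assoc, mul_smul_comm, one_mul, mul_one]
    match_scalars <;> field_simp <;> ring

theorem symmetrizer_inv (hT : IsHecke t (T : A)) :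
    symmetrizer t⁻¹ (↑T⁻¹ : A) = symmetrizer t (T : A) := by
  have ht := hT.ne_zero
  have hscalar : (1 + t⁻¹ ^ 2)⁻¹ = (1 + t ^ 2)⁻¹ * t ^ 2 := by
    rw [← inv_inj, mul_inv, inv_inv, inv_inv, add_mul, one_mul, inv_pow,
      mul_inv_cancel₀ (pow_ne_zero 2 ht), add_comm]
  rw [symmetrizer, symmetrizer, hscalar, mul_smul, hT.inv_eq]
  congr 1
  match_scalars <;> field_simp
  ring

theorem sphericalPart_inv (hT : IsHecke t (T : A)) :
    sphericalPart t⁻¹ (↑T⁻¹ : A) = sphericalPart t (T : A) := by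
  rw [sphericalPart, hT.symmetrizer_inv, sphericalPart]

theorem sphericalPart_inv_mul_left (hT : IsHecke t (T : A)) (x : A) :
    sphericalPart t (T : A) (↑T⁻¹ * x) = t⁻¹ • sphericalPart t (T : A) x := by
  rw [← hT.sphericalPart_inv, hT.inv.sphericalPart_mul_left]

theorem sphericalPart_inv_mul_right (hT : IsHecke t (T : A)) (x : A) :
    sphericalPart t (T : A) (x * ↑T⁻¹) = t⁻¹ • sphericalPart t (T : A) x := by
  rw [← hT.sphericalPart_inv, hT.inv.sphericalPart_mul_right]

theorem sphericalPart_mul_sphericalPart (hT : IsHecke t (T : A)) (ht : 1 + t ^ 2 ≠ 0) (x y : A) :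
    (1 + t⁻¹ ^ 2) • (sphericalPart t (T : A) x * sphericalPart t (T : A) y)
      = sphericalPart t (T : A) (x * (t⁻¹ ^ 2 • y + T * y * ↑T⁻¹)) := by
  set e := symmetrizer t (T : A) with he
  have hee : e * e = e := hT.isIdempotentElem_symmetrizer ht
  have ht₀ := hT.ne_zero
  have hTe : (↑T⁻¹ : A) * e = t⁻¹ • e := by
    rw [he, ← hT.symmetrizer_inv, hT.inv.mul_symmetrizer]
  have key : (1 + t⁻¹ ^ 2) • (e * y * e) = (t⁻¹ ^ 2 • y + T * y * ↑T⁻¹) * e := by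
    have hey : e * y = (1 + t ^ 2)⁻¹ • (y + t • (T * y)) := by
      rw [he, symmetrizer, smul_mul_assoc, add_mul, one_mul, smul_mul_assoc]
    simp only [hey, add_mul, smul_mul_assoc, mul_assoc, hTe, mul_smul_comm]
    match_scalars <;> field_simp <;> ring
  calc (1 + t⁻¹ ^ 2) • (e * x * e * (e * y * e))
      = e * x * (e * ((1 + t⁻¹ ^ 2) • (e * y * e))) := by
        simp only [mul_smul_comm, mul_assoc]
    _ = e * x * ((1 + t⁻¹ ^ 2) • (e * y * e)) := by
        rw [mul_smul_comm, ← mul_assoc, ← mul_assoc, hee]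
    _ = e * (x * (t⁻¹ ^ 2 • y + T * y * ↑T⁻¹)) * e := by
        rw [key]; simp only [mul_assoc]

theorem sphericalPart_add_conj_mul (hT : IsHecke t (T : A)) {a b : Aˣ} (hab : T⁻¹ * a * T⁻¹ = b)
    {z : A} (hz : Commute (T : A) z) :
    sphericalPart t (T : A) ((a + b) * z) = (1 + t⁻¹ ^ 2) • sphericalPart t (T : A) (a * z) := by
  have hbz : (b : A) * z = ↑T⁻¹ * (a * z * ↑T⁻¹) := by
    rw [← hab, Units.val_mul, Units.val_mul, mul_assoc, hz.units_inv_left.eq]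
    simp only [mul_assoc]
  rw [add_mul, map_add, hbz, hT.sphericalPart_inv_mul_left, hT.sphericalPart_inv_mul_right]
  module

theorem sphericalPart_mul_add_conj (hT : IsHecke t (T : A)) {a b : Aˣ} (hab : T⁻¹ * a * T⁻¹ = b)
    {z : A} (hz : Commute (T : A) z) :
    sphericalPart t (T : A) (z * (a + b)) = (1 + t⁻¹ ^ 2) • sphericalPart t (T : A) (z * a) := by
  have hzb : z * (b : A) = ↑T⁻¹ * (z * a * ↑T⁻¹) := by
    rw [← hab, Units.val_mul, Units.val_mul, ← mul_assoc, ← mul_assoc, ← hz.units_inv_left.eq]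
    simp only [mul_assoc]
  rw [mul_add, map_add, hzb, hT.sphericalPart_inv_mul_left, hT.sphericalPart_inv_mul_right]
  module

end IsHecke

end Hecke

section DAHATuple

variable {K A : Type*} [Field K] [Ring A] [Algebra K A] {q t : K} {T X₁ X₂ Y₁ Y₂ : Aˣ}

/-- Units of a `K`-algebra satisfying the defining relations of the double affine Hecke algebra of
type GL₂. The inverse generators are the inverses of the units, so that only the relations between
distinct generators remain. -/
structure IsDAHATuple (q t : K) (T X₁ X₂ Y₁ Y₂ : Aˣ) : Prop where
  ne_zero : q ≠ 0
  hecke : IsHecke t (T : A)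
  T_mul_X₁_mul_T : T * X₁ * T = X₂
  Tinv_mul_Y₁_mul_Tinv : T⁻¹ * Y₁ * T⁻¹ = Y₂
  commute_X : Commute X₁ X₂
  commute_Y : Commute Y₁ Y₂
  Y₁_mul_X₁_mul_X₂ : (Y₁ * (X₁ * X₂) : A) = q ^ 2 • (X₁ * X₂ * Y₁ : A)
  X₁inv_mul_Y₂ : X₁⁻¹ * Y₂ = Y₂ * X₁⁻¹ * T⁻¹ * T⁻¹

namespace IsDAHATuple

theorem Y₂_mul_X₂ (h : IsDAHATuple q t T X₁ X₂ Y₁ Y₂) : Y₂ * X₂ = T⁻¹ * (Y₁ * X₁) * T := by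
  rw [← h.T_mul_X₁_mul_T, ← h.Tinv_mul_Y₁_mul_Tinv]
  group

theorem Tinv_mul_Y₁ (h : IsDAHATuple q t T X₁ X₂ Y₁ Y₂) : T⁻¹ * Y₁ = Y₂ * T := by
  rw [← h.Tinv_mul_Y₁_mul_Tinv, inv_mul_cancel_right]

theorem X₂_mul_Tinv (h : IsDAHATuple q t T X₁ X₂ Y₁ Y₂) : X₂ * T⁻¹ = T * X₁ := by
  rw [← h.T_mul_X₁_mul_T, mul_inv_cancel_right]

theorem X₁_mul_Y₂ (h : IsDAHATuple q t T X₁ X₂ Y₁ Y₂) : X₁ * Y₂ = Y₂ * T * T * X₁ := by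
  calc X₁ * Y₂ = X₁ * (Y₂ * X₁⁻¹ * T⁻¹ * T⁻¹) * T * T * X₁ := by group
    _ = X₁ * (X₁⁻¹ * Y₂) * T * T * X₁ := by rw [h.X₁inv_mul_Y₂]
    _ = Y₂ * T * T * X₁ := by group

theorem Y₁_mul_X₂ (h : IsDAHATuple q t T X₁ X₂ Y₁ Y₂) : Y₁ * X₂ = X₂ * T⁻¹ * T⁻¹ * Y₁ := by
  calc Y₁ * X₂ = T * (T⁻¹ * Y₁ * T⁻¹) * T * T * X₁ * T := by rw [← h.T_mul_X₁_mul_T]; group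
    _ = T * (X₁ * Y₂) * T := by rw [h.Tinv_mul_Y₁_mul_Tinv, h.X₁_mul_Y₂]; group
    _ = X₂ * T⁻¹ * T⁻¹ * Y₁ := by rw [← h.T_mul_X₁_mul_T, ← h.Tinv_mul_Y₁_mul_Tinv]; group

theorem commute_T_X₁_mul_X₂ (h : IsDAHATuple q t T X₁ X₂ Y₁ Y₂) : Commute T (X₁ * X₂) := by
  calc T * (X₁ * X₂) = T * X₁ * T * X₁ * T := by rw [← h.T_mul_X₁_mul_T]; group
    _ = X₁ * X₂ * T := by rw [h.T_mul_X₁_mul_T, h.commute_X.eq]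

theorem commute_T_X₁_add_X₂ (h : IsDAHATuple q t T X₁ X₂ Y₁ Y₂) :
    Commute (T : A) (X₁ + X₂) := by
  have hX₂ : (X₂ : A) = T * X₁ * T := by rw [← h.T_mul_X₁_mul_T]; simp
  calc (T * (X₁ + X₂) : A) = T * X₁ + (T * T) * (X₁ * T) := by
        rw [hX₂, mul_add]; simp only [mul_assoc]
    _ = X₁ * T + T * X₁ * (T * T) := by
        simp only [h.hecke.mul_self, add_mul, mul_add, one_mul, mul_one, smul_mul_assoc,
          mul_smul_comm, mul_assoc]
        abel
    _ = (X₁ + X₂) * T := by rw [hX₂, add_mul]; simp only [mul_assoc]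

theorem semiconjBy_X₁_mul_X₂_Y₁ (h : IsDAHATuple q t T X₁ X₂ Y₁ Y₂) :
    SemiconjBy (X₁ * X₂ : A) Y₁ (q⁻¹ ^ 2 • (Y₁ : A)) := by
  rw [SemiconjBy, smul_mul_assoc, h.Y₁_mul_X₁_mul_X₂, inv_pow,
    inv_smul_smul₀ (pow_ne_zero 2 h.ne_zero)]

theorem semiconjBy_X₁_mul_X₂_Y₂ (h : IsDAHATuple q t T X₁ X₂ Y₁ Y₂) :
    SemiconjBy (X₁ * X₂ : A) Y₂ (q⁻¹ ^ 2 • (Y₂ : A)) := by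
  have hT : Commute (X₁ * X₂ : A) ↑T⁻¹ := by
    exact_mod_cast h.commute_T_X₁_mul_X₂.symm.inv_right.units_val
  rw [← h.Tinv_mul_Y₁_mul_Tinv]
  simpa only [Units.val_mul, mul_smul_comm, smul_mul_assoc]
    using (SemiconjBy.mul_right hT h.semiconjBy_X₁_mul_X₂_Y₁).mul_right hT

theorem X₁_mul_Y₁ (h : IsDAHATuple q t T X₁ X₂ Y₁ Y₂) :
    (X₁ * Y₁ : A) = q⁻¹ ^ 2 • (↑T⁻¹ * (↑T⁻¹ * (Y₁ * X₁)) : A) := by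
  have hT : X₁ * (Y₁ * X₂) = T⁻¹ * (T⁻¹ * (X₁ * X₂ * Y₁)) := by
    have hcomm := h.commute_T_X₁_mul_X₂.inv_left
    calc X₁ * (Y₁ * X₂) = X₁ * X₂ * (T⁻¹ * T⁻¹) * Y₁ := by rw [h.Y₁_mul_X₂]; group
      _ = T⁻¹ * (T⁻¹ * (X₁ * X₂ * Y₁)) := by rw [← (hcomm.mul_left hcomm).eq]; group
  rw [← Units.mul_left_inj X₂]
  calc (X₁ * Y₁ * X₂ : A) = ↑T⁻¹ * (↑T⁻¹ * (X₁ * X₂ * Y₁)) := by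
        rw [mul_assoc]; exact_mod_cast hT
    _ = q⁻¹ ^ 2 • (↑T⁻¹ * (↑T⁻¹ * (Y₁ * X₁))) * X₂ := by
        rw [h.semiconjBy_X₁_mul_X₂_Y₁.eq]
        simp only [smul_mul_assoc, mul_smul_comm, mul_assoc]

theorem commute_T_Y₁_mul_Y₂ (h : IsDAHATuple q t T X₁ X₂ Y₁ Y₂) : Commute T (Y₁ * Y₂) := by
  have hY₁ : T * Y₂ * T = Y₁ := by rw [mul_assoc, ← h.Tinv_mul_Y₁, mul_inv_cancel_left]
  calc T * (Y₁ * Y₂) = T * Y₂ * T * (T⁻¹ * Y₁) := by rw [h.commute_Y.eq]; group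
    _ = Y₁ * Y₂ * T := by rw [hY₁, h.Tinv_mul_Y₁, mul_assoc]

theorem X₁_mul_Y₁_mul_Y₂ (h : IsDAHATuple q t T X₁ X₂ Y₁ Y₂) :
    (X₁ * (Y₁ * Y₂) : A) = q⁻¹ ^ 2 • (Y₁ * Y₂ * X₁ : A) := by
  have hT : T⁻¹ * (T⁻¹ * (Y₁ * X₁)) * Y₂ = Y₁ * Y₂ * X₁ := by
    have hcomm := h.commute_T_Y₁_mul_Y₂
    calc T⁻¹ * (T⁻¹ * (Y₁ * X₁)) * Y₂ = T⁻¹ * T⁻¹ * Y₁ * (X₁ * Y₂) := by group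
      _ = T⁻¹ * T⁻¹ * (Y₁ * Y₂ * (T * T)) * X₁ := by rw [h.X₁_mul_Y₂]; group
      _ = Y₁ * Y₂ * X₁ := by rw [← (hcomm.mul_left hcomm).eq]; group
  rw [← mul_assoc, h.X₁_mul_Y₁, smul_mul_assoc]
  congr 1
  exact_mod_cast hT

/-- Cherednik's duality, exchanging the roles of `X` and `Y` and inverting both parameters. -/
theorem dual (h : IsDAHATuple q t T X₁ X₂ Y₁ Y₂) : IsDAHATuple q⁻¹ t⁻¹ T⁻¹ Y₁ Y₂ X₁ X₂ where
  ne_zero := inv_ne_zero h.ne_zero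
  hecke := h.hecke.inv
  T_mul_X₁_mul_T := h.Tinv_mul_Y₁_mul_Tinv
  Tinv_mul_Y₁_mul_Tinv := by rw [inv_inv, h.T_mul_X₁_mul_T]
  commute_X := h.commute_Y
  commute_Y := h.commute_X
  Y₁_mul_X₁_mul_X₂ := h.X₁_mul_Y₁_mul_Y₂
  X₁inv_mul_Y₂ := by
    calc Y₁⁻¹ * X₂ = Y₁⁻¹ * (X₂ * T⁻¹ * T⁻¹ * Y₁) * Y₁⁻¹ * T * T := by group
      _ = X₂ * Y₁⁻¹ * T⁻¹⁻¹ * T⁻¹⁻¹ := by rw [← h.Y₁_mul_X₂]; group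

theorem commute_T_Y₁_add_Y₂ (h : IsDAHATuple q t T X₁ X₂ Y₁ Y₂) :
    Commute (T : A) (Y₁ + Y₂) :=
  Commute.units_inv_left_iff.mp h.dual.commute_T_X₁_add_X₂

theorem commute_val_T_X₁_mul_X₂ (h : IsDAHATuple q t T X₁ X₂ Y₁ Y₂) :
    Commute (T : A) (X₁ * X₂) := mod_cast h.commute_T_X₁_mul_X₂.units_val

theorem commute_val_T_Y₁_mul_Y₂ (h : IsDAHATuple q t T X₁ X₂ Y₁ Y₂) :
    Commute (T : A) (Y₁ * Y₂) := mod_cast h.commute_T_Y₁_mul_Y₂.units_val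

section Spherical

local notation "𝒮" => sphericalPart t (T : A)

theorem sphericalPart_Y₂_mul_X₂ (h : IsDAHATuple q t T X₁ X₂ Y₁ Y₂) :
    𝒮 (Y₂ * X₂) = 𝒮 (Y₁ * X₁) := by
  have hconj : (Y₂ * X₂ : A) = ↑T⁻¹ * (Y₁ * X₁ * T) := by
    rw [← mul_assoc]; exact_mod_cast h.Y₂_mul_X₂
  rw [hconj, h.hecke.sphericalPart_inv_mul_left, h.hecke.sphericalPart_mul_right,
    inv_smul_smul₀ h.hecke.ne_zero]

theorem sphericalPart_R (h : IsDAHATuple q t T X₁ X₂ Y₁ Y₂) :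
    𝒮 (t⁻¹ ^ 2 • (Y₁ * X₁ : A) + Y₂ * X₂) = (1 + t⁻¹ ^ 2) • 𝒮 (Y₁ * X₁) := by
  rw [map_add, map_smul, h.sphericalPart_Y₂_mul_X₂]
  module

theorem sphericalPart_add_Y_mul (h : IsDAHATuple q t T X₁ X₂ Y₁ Y₂) {z : A}
    (hz : Commute (T : A) z) : 𝒮 ((Y₁ + Y₂) * z) = (1 + t⁻¹ ^ 2) • 𝒮 (Y₁ * z) :=
  h.hecke.sphericalPart_add_conj_mul h.Tinv_mul_Y₁_mul_Tinv hz

theorem sphericalPart_mul_add_Y (h : IsDAHATuple q t T X₁ X₂ Y₁ Y₂) {z : A}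
    (hz : Commute (T : A) z) : 𝒮 (z * (Y₁ + Y₂)) = (1 + t⁻¹ ^ 2) • 𝒮 (z * Y₁) :=
  h.hecke.sphericalPart_mul_add_conj h.Tinv_mul_Y₁_mul_Tinv hz

theorem sphericalPart_mul_add_X (h : IsDAHATuple q t T X₁ X₂ Y₁ Y₂) {z : A}
    (hz : Commute (T : A) z) : 𝒮 (z * (X₁ + X₂)) = (1 + t ^ 2) • 𝒮 (z * X₁) := by
  simpa only [h.hecke.sphericalPart_inv, inv_inv]
    using h.dual.sphericalPart_mul_add_Y hz.units_inv_left

theorem sphericalPart_X₁_mul_Y₁_mul (h : IsDAHATuple q t T X₁ X₂ Y₁ Y₂) (w : A) :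
    𝒮 (X₁ * Y₁ * w) = (q⁻¹ ^ 2 * t⁻¹ ^ 2) • 𝒮 (Y₁ * X₁ * w) := by
  rw [h.X₁_mul_Y₁, smul_mul_assoc, map_smul, mul_assoc, mul_assoc,
    h.hecke.sphericalPart_inv_mul_left, h.hecke.sphericalPart_inv_mul_left, smul_smul, smul_smul]
  ring_nf

theorem sphericalPart_Y₁_mul_X₁ (h : IsDAHATuple q t T X₁ X₂ Y₁ Y₂) :
    𝒮 (Y₁ * X₁) = (q ^ 2 * t ^ 2) • 𝒮 (X₁ * Y₁) := by
  have hq := h.ne_zero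
  have ht := h.hecke.ne_zero
  have hXY := h.sphericalPart_X₁_mul_Y₁_mul 1
  rw [mul_one, mul_one] at hXY
  rw [hXY]
  match_scalars
  field_simp

theorem X₂_mul_Y₁ (h : IsDAHATuple q t T X₁ X₂ Y₁ Y₂) :
    (X₂ * Y₁ : A) = Y₁ * X₂ + (t - t⁻¹) • (T * (X₁ * Y₁) : A) := by
  have hYX : (Y₁ * X₂ : A) = X₂ * ↑T⁻¹ * ↑T⁻¹ * Y₁ := mod_cast h.Y₁_mul_X₂
  have hXT : (X₂ * ↑T⁻¹ : A) = T * X₁ := mod_cast h.X₂_mul_Tinv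
  have hTT : (X₂ * ↑T⁻¹ * ↑T⁻¹ : A) = X₂ - (t - t⁻¹) • (T * X₁ : A) := by
    rw [hXT, h.hecke.inv_eq, mul_sub, mul_smul_comm, mul_one]
    congr 1
    exact_mod_cast h.T_mul_X₁_mul_T
  rw [hYX, hTT, sub_mul, smul_mul_assoc, mul_assoc (T : A), sub_add_cancel]

theorem sphericalPart_add_X_mul_Y₁_mul (h : IsDAHATuple q t T X₁ X₂ Y₁ Y₂) (w : A) :
    𝒮 ((X₁ + X₂) * Y₁ * w) = q⁻¹ ^ 2 • 𝒮 (Y₁ * X₁ * w) + 𝒮 (Y₁ * X₂ * w) := by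
  have ht := h.hecke.ne_zero
  rw [add_mul, h.X₂_mul_Y₁, add_mul, add_mul, map_add, map_add, smul_mul_assoc, mul_assoc (T : A),
    map_smul, h.hecke.sphericalPart_mul_left, h.sphericalPart_X₁_mul_Y₁_mul]
  match_scalars <;> field_simp
  ring

theorem sphericalPart_add_X_mul_add_Y (h : IsDAHATuple q t T X₁ X₂ Y₁ Y₂) (ht : 1 + t ^ 2 ≠ 0) :
    𝒮 (X₁ + X₂) * 𝒮 (Y₁ + Y₂)
      = 𝒮 (Y₁ + Y₂) * 𝒮 (X₁ + X₂) + ((q⁻¹ ^ 2 - 1) * (1 + t⁻¹ ^ 2)) • 𝒮 (Y₁ * X₁) := by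
  have hPQ : 𝒮 (X₁ + X₂) * 𝒮 (Y₁ + Y₂)
      = (1 + t⁻¹ ^ 2) • (q⁻¹ ^ 2 • 𝒮 (Y₁ * X₁) + 𝒮 (Y₁ * X₂)) := by
    rw [h.hecke.sphericalPart_mul_of_commute_left ht h.commute_T_X₁_add_X₂,
      h.sphericalPart_mul_add_Y h.commute_T_X₁_add_X₂]
    simpa only [mul_one] using congrArg _ (h.sphericalPart_add_X_mul_Y₁_mul 1)
  have hQP : 𝒮 (Y₁ + Y₂) * 𝒮 (X₁ + X₂) = (1 + t⁻¹ ^ 2) • (𝒮 (Y₁ * X₁) + 𝒮 (Y₁ * X₂)) := by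
    rw [h.hecke.sphericalPart_mul_of_commute_left ht h.commute_T_Y₁_add_Y₂,
      h.sphericalPart_add_Y_mul h.commute_T_X₁_add_X₂, mul_add, map_add]
  rw [hPQ, hQP]
  module

theorem sphericalPart_add_Y_mul_X₁_mul_X₂ (h : IsDAHATuple q t T X₁ X₂ Y₁ Y₂)
    (ht : 1 + t ^ 2 ≠ 0) :
    𝒮 (Y₁ + Y₂) * 𝒮 (X₁ * X₂) = (1 + t⁻¹ ^ 2) • 𝒮 (Y₁ * (X₁ * X₂)) := by
  rw [h.hecke.sphericalPart_mul_of_commute_left ht h.commute_T_Y₁_add_Y₂,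
    h.sphericalPart_add_Y_mul h.commute_val_T_X₁_mul_X₂]

theorem sphericalPart_Y₁_mul_Y₂_mul_add_X (h : IsDAHATuple q t T X₁ X₂ Y₁ Y₂)
    (ht : 1 + t ^ 2 ≠ 0) :
    𝒮 (Y₁ * Y₂) * 𝒮 (X₁ + X₂) = (1 + t ^ 2) • 𝒮 (Y₁ * Y₂ * X₁) := by
  rw [h.hecke.sphericalPart_mul_of_commute_left ht h.commute_val_T_Y₁_mul_Y₂,
    h.sphericalPart_mul_add_X h.commute_val_T_Y₁_mul_Y₂]

theorem sphericalPart_add_X_mul_Y₁_mul_X₁ (h : IsDAHATuple q t T X₁ X₂ Y₁ Y₂)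
    (ht : 1 + t ^ 2 ≠ 0) :
    𝒮 (X₁ + X₂) * 𝒮 (Y₁ * X₁)
      = q⁻¹ ^ 2 • (𝒮 (Y₁ * X₁) * 𝒮 (X₁ + X₂)) + (1 - q⁻¹ ^ 2) • 𝒮 (Y₁ * (X₁ * X₂)) := by
  have hX : (Y₁ * X₂ * X₁ : A) = Y₁ * (X₁ * X₂) := by
    rw [mul_assoc, h.commute_X.units_val.eq]
  rw [h.hecke.sphericalPart_mul_of_commute_left ht h.commute_T_X₁_add_X₂,
    h.hecke.sphericalPart_mul_of_commute_right ht _ h.commute_T_X₁_add_X₂,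
    ← mul_assoc, h.sphericalPart_add_X_mul_Y₁_mul, hX, mul_add (Y₁ * X₁ : A), map_add,
    mul_assoc (Y₁ : A) X₁ X₂]
  module

theorem sphericalPart_Y₁_mul_X₁_mul_add_Y (h : IsDAHATuple q t T X₁ X₂ Y₁ Y₂)
    (ht : 1 + t ^ 2 ≠ 0) :
    𝒮 (Y₁ * X₁) * 𝒮 (Y₁ + Y₂)
      = q⁻¹ ^ 2 • (𝒮 (Y₁ + Y₂) * 𝒮 (Y₁ * X₁))
        + ((1 - q⁻¹ ^ 2) * t ^ 2) • 𝒮 (Y₁ * Y₂ * X₁) := by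
  have hq := h.ne_zero
  have ht₀ := h.hecke.ne_zero
  have hdual := h.dual.sphericalPart_add_X_mul_Y₁_mul_X₁ (one_add_inv_sq_ne_zero ht₀ ht)
  simp only [h.hecke.sphericalPart_inv, inv_inv, h.X₁_mul_Y₁_mul_Y₂, map_smul] at hdual
  rw [h.sphericalPart_Y₁_mul_X₁, mul_smul_comm, hdual, smul_mul_assoc]
  match_scalars <;> field_simp
  ring

theorem sphericalPart_Y₁_mul_X₁_mul_Y₁_mul_X₁ (h : IsDAHATuple q t T X₁ X₂ Y₁ Y₂) :
    𝒮 (Y₁ * X₁ * (Y₁ * X₁))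
      = q⁻¹ ^ 2 • (𝒮 (Y₁ * Y₁ * (X₁ * X₁)) - (t ^ 2 - 1) • 𝒮 (Y₁ * Y₂ * (X₁ * X₁))) := by
  have ht := h.hecke.ne_zero
  have hYT : (↑T⁻¹ * Y₁ : A) = Y₂ * T := mod_cast h.Tinv_mul_Y₁
  have hYTTY : (Y₁ * (↑T⁻¹ * (↑T⁻¹ * Y₁)) : A) = Y₁ * Y₁ - (t - t⁻¹) • (T * (Y₁ * Y₂)) := by
    rw [h.commute_val_T_Y₁_mul_Y₂.eq, mul_assoc (Y₁ : A) Y₂, ← hYT, ← mul_assoc (↑T⁻¹ : A) ↑T⁻¹,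
      h.hecke.inv.mul_self, inv_inv, add_mul, one_mul, smul_mul_assoc, mul_add, mul_smul_comm]
    module
  have hYX : (Y₁ * X₁ * (Y₁ * X₁) : A)
      = q⁻¹ ^ 2 • (Y₁ * (↑T⁻¹ * (↑T⁻¹ * Y₁)) * (X₁ * X₁) : A) := by
    rw [mul_assoc, ← mul_assoc (X₁ : A), h.X₁_mul_Y₁]
    simp only [smul_mul_assoc, mul_smul_comm, mul_assoc]
  rw [hYX, hYTTY, sub_mul, smul_mul_assoc, mul_assoc (T : A), map_smul, map_sub, map_smul,
    h.hecke.sphericalPart_mul_left]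
  match_scalars <;> field_simp

theorem sphericalPart_Y₁_mul_X₁_mul_Y₂_mul_X₂ (h : IsDAHATuple q t T X₁ X₂ Y₁ Y₂) :
    𝒮 (Y₁ * X₁ * (Y₂ * X₂)) = t ^ 2 • 𝒮 (Y₁ * Y₂ * (X₁ * X₂)) := by
  have hu : (X₁ * Y₂ : A) = Y₂ * T * T * X₁ := mod_cast h.X₁_mul_Y₂
  have hY : (Y₁ * X₁ * (Y₂ * X₂) : A) = T * (T * (Y₁ * Y₂ * (X₁ * X₂))) := by
    calc (Y₁ * X₁ * (Y₂ * X₂) : A) = Y₁ * (X₁ * Y₂) * X₂ := by simp only [mul_assoc]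
      _ = Y₁ * Y₂ * (T * T) * (X₁ * X₂) := by rw [hu]; simp only [mul_assoc]
      _ = T * (T * (Y₁ * Y₂ * (X₁ * X₂))) := by
        rw [← (h.commute_val_T_Y₁_mul_Y₂.mul_left h.commute_val_T_Y₁_mul_Y₂).eq]
        simp only [mul_assoc]
  rw [hY, h.hecke.sphericalPart_mul_left, h.hecke.sphericalPart_mul_left, smul_smul, pow_two]

theorem sphericalPart_Y₁_mul_X₁_mul_self (h : IsDAHATuple q t T X₁ X₂ Y₁ Y₂)
    (ht : 1 + t ^ 2 ≠ 0) :
    (1 + t⁻¹ ^ 2) • (𝒮 (Y₁ * X₁) * 𝒮 (Y₁ * X₁))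
      = 𝒮 (Y₁ * Y₂ * (X₁ * X₂)) + q⁻¹ ^ 2 • 𝒮 (Y₁ * Y₁ * (X₁ * X₁))
        - (q⁻¹ ^ 2 * (t ^ 2 - 1)) • 𝒮 (Y₁ * Y₂ * (X₁ * X₁)) := by
  have ht₀ := h.hecke.ne_zero
  have hconj : (T * (Y₂ * X₂) * ↑T⁻¹ : A) = Y₁ * X₁ := by
    have hu : T * (Y₂ * X₂) * T⁻¹ = Y₁ * X₁ := by rw [h.Y₂_mul_X₂]; group
    exact_mod_cast hu
  calc (1 + t⁻¹ ^ 2) • (𝒮 (Y₁ * X₁) * 𝒮 (Y₁ * X₁))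
      = (1 + t⁻¹ ^ 2) • (𝒮 (Y₁ * X₁) * 𝒮 (Y₂ * X₂)) := by rw [h.sphericalPart_Y₂_mul_X₂]
    _ = t⁻¹ ^ 2 • 𝒮 (Y₁ * X₁ * (Y₂ * X₂)) + 𝒮 (Y₁ * X₁ * (Y₁ * X₁)) := by
      rw [h.hecke.sphericalPart_mul_sphericalPart ht, hconj, mul_add, map_add, mul_smul_comm,
        map_smul]
    _ = _ := by
      rw [h.sphericalPart_Y₁_mul_X₁_mul_Y₂_mul_X₂, h.sphericalPart_Y₁_mul_X₁_mul_Y₁_mul_X₁]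
      match_scalars <;> field_simp

theorem sphericalPart_Y₁_mul_Y₂_mul_add_X_mul_add_X (h : IsDAHATuple q t T X₁ X₂ Y₁ Y₂)
    (ht : 1 + t ^ 2 ≠ 0) :
    𝒮 (Y₁ * Y₂) * 𝒮 (X₁ + X₂) * 𝒮 (X₁ + X₂)
      = (1 + t ^ 2) • (𝒮 (Y₁ * Y₂ * (X₁ * X₁)) + 𝒮 (Y₁ * Y₂ * (X₁ * X₂))) := by
  rw [h.hecke.sphericalPart_mul_of_commute_left ht h.commute_val_T_Y₁_mul_Y₂,
    h.hecke.sphericalPart_mul_of_commute_right ht _ h.commute_T_X₁_add_X₂,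
    h.sphericalPart_mul_add_X (h.commute_val_T_Y₁_mul_Y₂.mul_right h.commute_T_X₁_add_X₂),
    mul_assoc, add_mul, ← h.commute_X.units_val.eq, mul_add, map_add]

theorem sphericalPart_add_Y_mul_add_Y_mul_X₁_mul_X₂ (h : IsDAHATuple q t T X₁ X₂ Y₁ Y₂)
    (ht : 1 + t ^ 2 ≠ 0) :
    𝒮 (Y₁ + Y₂) * 𝒮 (Y₁ + Y₂) * 𝒮 (X₁ * X₂)
      = (1 + t⁻¹ ^ 2) • (𝒮 (Y₁ * Y₁ * (X₁ * X₂)) + 𝒮 (Y₁ * Y₂ * (X₁ * X₂))) := by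
  rw [h.hecke.sphericalPart_mul_of_commute_left ht h.commute_T_Y₁_add_Y₂,
    h.hecke.sphericalPart_mul_of_commute_right ht _ h.commute_val_T_X₁_mul_X₂, mul_assoc,
    h.sphericalPart_add_Y_mul (h.commute_T_Y₁_add_Y₂.mul_right h.commute_val_T_X₁_mul_X₂),
    ← mul_assoc, mul_add, add_mul, map_add]

theorem sphericalPart_add_Y_mul_Y₁_mul_X₁_mul_add_X (h : IsDAHATuple q t T X₁ X₂ Y₁ Y₂)
    (ht : 1 + t ^ 2 ≠ 0) :
    𝒮 (Y₁ + Y₂) * 𝒮 (Y₁ * X₁) * 𝒮 (X₁ + X₂)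
      = 𝒮 (Y₁ * Y₁ * (X₁ * X₁)) + 𝒮 (Y₁ * Y₁ * (X₁ * X₂))
        + 𝒮 (Y₁ * Y₂ * (X₁ * X₁)) + 𝒮 (Y₁ * Y₂ * (X₁ * X₂)) := by
  have hexpand : ((Y₁ + Y₂) * (Y₁ * X₁) * (X₁ + X₂) : A)
      = Y₁ * Y₁ * (X₁ * X₁) + Y₁ * Y₁ * (X₁ * X₂) + Y₁ * Y₂ * (X₁ * X₁)
        + Y₁ * Y₂ * (X₁ * X₂) := by
    rw [← mul_assoc, add_mul, ← h.commute_Y.units_val.eq]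
    noncomm_ring
  rw [h.hecke.sphericalPart_mul_of_commute_left ht h.commute_T_Y₁_add_Y₂,
    h.hecke.sphericalPart_mul_of_commute_right ht _ h.commute_T_X₁_add_X₂, hexpand]
  simp only [map_add]

end Spherical

end IsDAHATuple

end DAHATuple

section AlgATuple

variable {K A : Type*} [Field K] [Ring A] [Algebra K A]

/-- A family in the corner `e A e` of an idempotent `e` satisfying the defining relations of `𝒜`,
the unit of `𝒜` being interpreted as `e`. -/
structure IsAlgATuple (q t : K) (e : A) (v : AGen → A) : Prop where
  isIdempotentElem : IsIdempotentElem e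
  mem_corner (g : AGen) : v g ∈ Subsemigroup.corner e
  P2P2i : v .P2 * v .P2i = e
  P2iP2 : v .P2i * v .P2 = e
  Q2Q2i : v .Q2 * v .Q2i = e
  Q2iQ2 : v .Q2i * v .Q2 = e
  P2P1 : v .P2 * v .P1 = v .P1 * v .P2
  Q2Q1 : v .Q2 * v .Q1 = v .Q1 * v .Q2
  P2Q2 : v .P2 * v .Q2 = q⁻¹ ^ 4 • (v .Q2 * v .P2)
  P2Q1 : v .P2 * v .Q1 = q⁻¹ ^ 2 • (v .Q1 * v .P2)
  P1Q2 : v .P1 * v .Q2 = q⁻¹ ^ 2 • (v .Q2 * v .P1)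
  P1Q1 : v .P1 * v .Q1 = v .Q1 * v .P1 + (q⁻¹ ^ 2 - 1) • v .R
  P2R : v .P2 * v .R = q⁻¹ ^ 2 • (v .R * v .P2)
  RQ2 : v .R * v .Q2 = q⁻¹ ^ 2 • (v .Q2 * v .R)
  P1R : v .P1 * v .R = q⁻¹ ^ 2 • (v .R * v .P1) + (1 - q⁻¹ ^ 2) • (v .Q1 * v .P2)
  RQ1 : v .R * v .Q1 = q⁻¹ ^ 2 • (v .Q1 * v .R) + (1 - q⁻¹ ^ 2) • (v .Q2 * v .P1)
  RR : v .R * v .R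
    = ((1 + t ^ 2) * (q⁻¹ ^ 2 + t⁻¹ ^ 2)) • (v .Q2 * v .P2)
      - q⁻¹ ^ 2 • (v .Q2 * v .P1 * v .P1)
      - q⁻¹ ^ 2 • (v .Q1 * v .Q1 * v .P2)
      + q⁻¹ ^ 2 • (v .Q1 * v .R * v .P1)

/-- The images of the generators of `𝒜` in the spherical subalgebra attached to a DAHA tuple. -/
def sphericalTuple (t : K) (T X₁ X₂ Y₁ Y₂ : Aˣ) : AGen → A
  | .P1 => sphericalPart t (T : A) (X₁ + X₂)
  | .P2 => sphericalPart t (T : A) (X₁ * X₂)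
  | .P2i => sphericalPart t (T : A) (↑X₁⁻¹ * ↑X₂⁻¹)
  | .Q1 => sphericalPart t (T : A) (Y₁ + Y₂)
  | .Q2 => sphericalPart t (T : A) (Y₁ * Y₂)
  | .Q2i => sphericalPart t (T : A) (↑Y₁⁻¹ * ↑Y₂⁻¹)
  | .R => sphericalPart t (T : A) (t⁻¹ ^ 2 • (Y₁ * X₁ : A) + Y₂ * X₂)

namespace IsDAHATuple

variable {q t : K} {T X₁ X₂ Y₁ Y₂ : Aˣ}

local notation "𝒮" => sphericalPart t (T : A)

theorem sphericalPart_X₁_mul_X₂_mul_inv (h : IsDAHATuple q t T X₁ X₂ Y₁ Y₂)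
    (ht : 1 + t ^ 2 ≠ 0) : 𝒮 (X₁ * X₂) * 𝒮 (↑X₁⁻¹ * ↑X₂⁻¹) = symmetrizer t (T : A) := by
  have hinv : (X₁ * X₂ * (↑X₁⁻¹ * ↑X₂⁻¹) : A) = 1 := by
    have hu : X₁ * X₂ * (X₁⁻¹ * X₂⁻¹) = 1 := by rw [h.commute_X.eq]; group
    simpa only [Units.val_mul, Units.val_one] using congrArg Units.val hu
  rw [h.hecke.sphericalPart_mul_of_commute_left ht h.commute_val_T_X₁_mul_X₂, hinv,
    sphericalPart_apply, mul_one, h.hecke.isIdempotentElem_symmetrizer ht]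

theorem sphericalPart_inv_mul_X₁_mul_X₂ (h : IsDAHATuple q t T X₁ X₂ Y₁ Y₂)
    (ht : 1 + t ^ 2 ≠ 0) : 𝒮 (↑X₁⁻¹ * ↑X₂⁻¹) * 𝒮 (X₁ * X₂) = symmetrizer t (T : A) := by
  have hinv : (↑X₁⁻¹ * ↑X₂⁻¹ * (X₁ * X₂) : A) = 1 := by
    have hu : X₁⁻¹ * X₂⁻¹ * (X₁ * X₂) = 1 := by rw [h.commute_X.eq]; group
    simpa only [Units.val_mul, Units.val_one] using congrArg Units.val hu
  rw [h.hecke.sphericalPart_mul_of_commute_right ht _ h.commute_val_T_X₁_mul_X₂, hinv,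
    sphericalPart_apply, mul_one, h.hecke.isIdempotentElem_symmetrizer ht]

theorem sphericalPart_X₁_mul_X₂_mul_comm (h : IsDAHATuple q t T X₁ X₂ Y₁ Y₂)
    (ht : 1 + t ^ 2 ≠ 0) {y : A} {c : K} (hy : SemiconjBy (X₁ * X₂ : A) y (c • y)) :
    𝒮 (X₁ * X₂) * 𝒮 y = c • (𝒮 y * 𝒮 (X₁ * X₂)) :=
  h.hecke.sphericalPart_mul_of_semiconjBy ht h.commute_val_T_X₁_mul_X₂ hy

theorem semiconjBy_X₁_mul_X₂_add_Y (h : IsDAHATuple q t T X₁ X₂ Y₁ Y₂) :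
    SemiconjBy (X₁ * X₂ : A) (Y₁ + Y₂) (q⁻¹ ^ 2 • (Y₁ + Y₂ : A)) := by
  simpa only [smul_add] using h.semiconjBy_X₁_mul_X₂_Y₁.add_right h.semiconjBy_X₁_mul_X₂_Y₂

theorem semiconjBy_X₁_mul_X₂_Y₁_mul_Y₂ (h : IsDAHATuple q t T X₁ X₂ Y₁ Y₂) :
    SemiconjBy (X₁ * X₂ : A) (Y₁ * Y₂) (q⁻¹ ^ 4 • (Y₁ * Y₂ : A)) := by
  simpa only [smul_mul_smul_comm, ← pow_add]
    using h.semiconjBy_X₁_mul_X₂_Y₁.mul_right h.semiconjBy_X₁_mul_X₂_Y₂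

theorem commute_X₁_mul_X₂_X₁ (h : IsDAHATuple q t T X₁ X₂ Y₁ Y₂) :
    Commute (X₁ * X₂ : A) X₁ :=
  (Commute.refl (X₁ : A)).mul_left h.commute_X.units_val.symm

theorem semiconjBy_X₁_mul_X₂_Y₁_mul_X₁ (h : IsDAHATuple q t T X₁ X₂ Y₁ Y₂) :
    SemiconjBy (X₁ * X₂ : A) (Y₁ * X₁) (q⁻¹ ^ 2 • (Y₁ * X₁ : A)) := by
  simpa only [smul_mul_assoc]
    using h.semiconjBy_X₁_mul_X₂_Y₁.mul_right h.commute_X₁_mul_X₂_X₁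

theorem commute_sphericalPart_X₁_mul_X₂_add_X (h : IsDAHATuple q t T X₁ X₂ Y₁ Y₂)
    (ht : 1 + t ^ 2 ≠ 0) : Commute (𝒮 (X₁ * X₂)) (𝒮 (X₁ + X₂)) := by
  have hX₂ : Commute (X₁ * X₂ : A) X₂ := h.commute_X.units_val.mul_left (Commute.refl (X₂ : A))
  have hcomm : SemiconjBy (X₁ * X₂ : A) (X₁ + X₂) ((1 : K) • (X₁ + X₂ : A)) := by
    rw [one_smul]; exact h.commute_X₁_mul_X₂_X₁.add_right hX₂
  exact (h.sphericalPart_X₁_mul_X₂_mul_comm ht hcomm).trans (one_smul K _)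

theorem sphericalPart_X₁_mul_X₂_mul_Y₁_mul_X₁ (h : IsDAHATuple q t T X₁ X₂ Y₁ Y₂)
    (ht : 1 + t ^ 2 ≠ 0) :
    𝒮 (X₁ * X₂) * 𝒮 (Y₁ * X₁) = q⁻¹ ^ 2 • (𝒮 (Y₁ * X₁) * 𝒮 (X₁ * X₂)) :=
  h.sphericalPart_X₁_mul_X₂_mul_comm ht h.semiconjBy_X₁_mul_X₂_Y₁_mul_X₁

theorem sphericalPart_Y₁_mul_X₁_mul_Y₁_mul_Y₂ (h : IsDAHATuple q t T X₁ X₂ Y₁ Y₂)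
    (ht : 1 + t ^ 2 ≠ 0) :
    𝒮 (Y₁ * X₁) * 𝒮 (Y₁ * Y₂) = q⁻¹ ^ 2 • (𝒮 (Y₁ * Y₂) * 𝒮 (Y₁ * X₁)) := by
  have hdual := h.dual.sphericalPart_X₁_mul_X₂_mul_Y₁_mul_X₁
    (one_add_inv_sq_ne_zero h.hecke.ne_zero ht)
  rw [h.hecke.sphericalPart_inv, inv_inv] at hdual
  rw [h.sphericalPart_Y₁_mul_X₁, mul_smul_comm, hdual, smul_mul_assoc, smul_comm _ (q ^ 2),
    inv_pow, inv_smul_smul₀ (pow_ne_zero 2 h.ne_zero)]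

theorem sphericalPart_add_X_mul_Y₁_mul_Y₂ (h : IsDAHATuple q t T X₁ X₂ Y₁ Y₂)
    (ht : 1 + t ^ 2 ≠ 0) :
    𝒮 (X₁ + X₂) * 𝒮 (Y₁ * Y₂) = q⁻¹ ^ 2 • (𝒮 (Y₁ * Y₂) * 𝒮 (X₁ + X₂)) := by
  have hdual := h.dual.sphericalPart_X₁_mul_X₂_mul_comm
    (one_add_inv_sq_ne_zero h.hecke.ne_zero ht) h.dual.semiconjBy_X₁_mul_X₂_add_Y
  rw [h.hecke.sphericalPart_inv, inv_inv] at hdual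
  rw [hdual, inv_pow, inv_smul_smul₀ (pow_ne_zero 2 h.ne_zero)]

theorem isAlgATuple_sphericalTuple (h : IsDAHATuple q t T X₁ X₂ Y₁ Y₂) (ht : 1 + t ^ 2 ≠ 0) :
    IsAlgATuple q t (symmetrizer t (T : A)) (sphericalTuple t T X₁ X₂ Y₁ Y₂) where
  isIdempotentElem := h.hecke.isIdempotentElem_symmetrizer ht
  mem_corner g := by cases g <;> exact sphericalPart_mem_corner _ _
  P2P2i := h.sphericalPart_X₁_mul_X₂_mul_inv ht
  P2iP2 := h.sphericalPart_inv_mul_X₁_mul_X₂ ht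
  Q2Q2i := by
    have hdual := h.dual.sphericalPart_X₁_mul_X₂_mul_inv
      (one_add_inv_sq_ne_zero h.hecke.ne_zero ht)
    rwa [h.hecke.sphericalPart_inv, h.hecke.symmetrizer_inv] at hdual
  Q2iQ2 := by
    have hdual := h.dual.sphericalPart_inv_mul_X₁_mul_X₂
      (one_add_inv_sq_ne_zero h.hecke.ne_zero ht)
    rwa [h.hecke.sphericalPart_inv, h.hecke.symmetrizer_inv] at hdual
  P2P1 := h.commute_sphericalPart_X₁_mul_X₂_add_X ht
  Q2Q1 := by
    have hdual := h.dual.commute_sphericalPart_X₁_mul_X₂_add_X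
      (one_add_inv_sq_ne_zero h.hecke.ne_zero ht)
    rwa [h.hecke.sphericalPart_inv] at hdual
  P2Q2 := h.sphericalPart_X₁_mul_X₂_mul_comm ht h.semiconjBy_X₁_mul_X₂_Y₁_mul_Y₂
  P2Q1 := h.sphericalPart_X₁_mul_X₂_mul_comm ht h.semiconjBy_X₁_mul_X₂_add_Y
  P1Q2 := h.sphericalPart_add_X_mul_Y₁_mul_Y₂ ht
  P1Q1 := by
    simp only [sphericalTuple, h.sphericalPart_R, smul_smul]
    exact h.sphericalPart_add_X_mul_add_Y ht
  P2R := by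
    simp only [sphericalTuple, h.sphericalPart_R, mul_smul_comm, smul_mul_assoc,
      h.sphericalPart_X₁_mul_X₂_mul_Y₁_mul_X₁ ht]
    module
  RQ2 := by
    simp only [sphericalTuple, h.sphericalPart_R, mul_smul_comm, smul_mul_assoc,
      h.sphericalPart_Y₁_mul_X₁_mul_Y₁_mul_Y₂ ht]
    module
  P1R := by
    simp only [sphericalTuple, h.sphericalPart_R, mul_smul_comm, smul_mul_assoc,
      h.sphericalPart_add_X_mul_Y₁_mul_X₁ ht, h.sphericalPart_add_Y_mul_X₁_mul_X₂ ht]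
    module
  RQ1 := by
    have ht₀ := h.hecke.ne_zero
    simp only [sphericalTuple, h.sphericalPart_R, mul_smul_comm, smul_mul_assoc,
      h.sphericalPart_Y₁_mul_X₁_mul_add_Y ht, h.sphericalPart_Y₁_mul_Y₂_mul_add_X ht]
    match_scalars <;> field_simp
    ring
  RR := by
    have ht₀ := h.hecke.ne_zero
    have hRR : 𝒮 (t⁻¹ ^ 2 • (Y₁ * X₁ : A) + Y₂ * X₂) * 𝒮 (t⁻¹ ^ 2 • (Y₁ * X₁ : A) + Y₂ * X₂)
        = (1 + t⁻¹ ^ 2) • (1 + t⁻¹ ^ 2) • (𝒮 (Y₁ * X₁) * 𝒮 (Y₁ * X₁)) := by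
      simp only [h.sphericalPart_R, mul_smul_comm, smul_mul_assoc]
    simp only [sphericalTuple, hRR, h.sphericalPart_Y₁_mul_X₁_mul_self ht]
    rw [h.sphericalPart_Y₁_mul_Y₂_mul_add_X_mul_add_X ht,
      h.sphericalPart_add_Y_mul_add_Y_mul_X₁_mul_X₂ ht, h.sphericalPart_R, mul_smul_comm,
      smul_mul_assoc, h.sphericalPart_add_Y_mul_Y₁_mul_X₁_mul_add_X ht,
      h.hecke.sphericalPart_mul_of_commute_left ht h.commute_val_T_Y₁_mul_Y₂]
    match_scalars <;> field_simp <;> ring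

end IsDAHATuple

end AlgATuple

section Corner

variable {K A : Type*} [CommSemiring K] [Semiring A] [Algebra K A] {e : A}

/-- The `K`-module structure on the corner `e A e`, restricted from `A`. -/
instance cornerModule (he : IsIdempotentElem e) : Module K he.Corner where
  smul c x := ⟨c • x.1, by
    obtain ⟨y, hy⟩ := x.2
    exact ⟨c • y, by simp only [mul_smul_comm, smul_mul_assoc, ← hy]⟩⟩
  one_smul x := Subtype.ext (one_smul K x.1)
  mul_smul a b x := Subtype.ext (mul_smul a b x.1)
  smul_zero a := Subtype.ext (smul_zero a)
  smul_add a x y := Subtype.ext (smul_add a x.1 y.1)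
  add_smul a b x := Subtype.ext (add_smul a b x.1)
  zero_smul x := Subtype.ext (zero_smul K x.1)

/-- The corner `e A e` as a unital `K`-algebra with unit `e`. -/
instance cornerAlgebra (he : IsIdempotentElem e) : Algebra K he.Corner :=
  Algebra.ofModule (fun c x y => Subtype.ext (smul_mul_assoc c x.1 y.1))
    (fun c x y => Subtype.ext (mul_smul_comm c x.1 y.1))

/-- The inclusion of the corner `e A e` in `A`, which does not preserve the unit. -/
def cornerSubtype (K : Type*) [CommSemiring K] [Algebra K A] (he : IsIdempotentElem e) :
    he.Corner →ₙₐ[K] A where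
  toFun x := x.1
  map_smul' _ _ := rfl
  map_zero' := rfl
  map_add' _ _ := rfl
  map_mul' _ _ := rfl

theorem cornerSubtype_injective (he : IsIdempotentElem e) :
    Function.Injective (cornerSubtype K he) :=
  Subtype.val_injective

theorem cornerSubtype_one (he : IsIdempotentElem e) : cornerSubtype K he 1 = e := rfl

end Corner

theorem IsAlgATuple.exists_nonUnitalAlgHom {A : Type*} [Ring A] [Algebra ℂ A] {q t : ℂ} {e : A}
    {v : AGen → A} (h : IsAlgATuple q t e v) :
    ∃ Φ : AlgA q t →ₙₐ[ℂ] A, Φ 1 = e ∧ ∀ g, Φ (RingQuot.mkAlgHom ℂ (ARel q t) (gA g)) = v g := by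
  have he := h.isIdempotentElem
  let F : FA →ₐ[ℂ] he.Corner := FreeAlgebra.lift ℂ fun g => ⟨v g, h.mem_corner g⟩
  have hF (g : AGen) : cornerSubtype ℂ he (F (gA g)) = v g :=
    congrArg (cornerSubtype ℂ he) (FreeAlgebra.lift_ι_apply _ g)
  have hrel ⦃x y : FA⦄ (hxy : ARel q t x y) : F x = F y := by
    apply cornerSubtype_injective (K := ℂ) he
    cases hxy <;>
      simp only [map_mul, map_add, map_sub, map_smul, map_one, hF, cornerSubtype_one, h.P2P2i,
        h.P2iP2, h.Q2Q2i, h.Q2iQ2, h.P2P1, h.Q2Q1, h.P2Q2, h.P2Q1, h.P1Q2, h.P1Q1, h.P2R, h.RQ2,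
        h.P1R, h.RQ1, h.RR]
  refine ⟨(cornerSubtype ℂ he).comp (RingQuot.liftAlgHom ℂ ⟨F, hrel⟩ : AlgA q t →ₐ[ℂ] he.Corner),
    ?_, fun g => ?_⟩
  · exact congrArg (cornerSubtype ℂ he) (map_one (RingQuot.liftAlgHom ℂ ⟨F, hrel⟩))
  · rw [← hF g]
    exact congrArg (cornerSubtype ℂ he) (RingQuot.liftAlgHom_mkAlgHom_apply ℂ F hrel (gA g))

section DAHAGenerators

/-- The unit of a quotient ring represented by a pair of elements which the relations make mutually
inverse. -/
def ringQuotUnit {K B : Type*} [CommSemiring K] [Semiring B] [Algebra K B] {r : B → B → Prop}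
    (a b : B) (hab : r (a * b) 1) (hba : r (b * a) 1) : (RingQuot r)ˣ where
  val := RingQuot.mkAlgHom K r a
  inv := RingQuot.mkAlgHom K r b
  val_inv := by rw [← map_mul, RingQuot.mkAlgHom_rel K hab, map_one]
  inv_val := by rw [← map_mul, RingQuot.mkAlgHom_rel K hba, map_one]

/-- The generator `T` of the DAHA as a unit. -/
def unitT (q t : ℂ) : (DAHA q t)ˣ := ringQuotUnit (K := ℂ) _ _ DRel.TTi DRel.TiT

/-- The generator `X₁` of the DAHA as a unit. -/
def unitX1 (q t : ℂ) : (DAHA q t)ˣ := ringQuotUnit (K := ℂ) _ _ DRel.X1X1i DRel.X1iX1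

/-- The generator `X₂` of the DAHA as a unit. -/
def unitX2 (q t : ℂ) : (DAHA q t)ˣ := ringQuotUnit (K := ℂ) _ _ DRel.X2X2i DRel.X2iX2

/-- The generator `Y₁` of the DAHA as a unit. -/
def unitY1 (q t : ℂ) : (DAHA q t)ˣ := ringQuotUnit (K := ℂ) _ _ DRel.Y1Y1i DRel.Y1iY1

/-- The generator `Y₂` of the DAHA as a unit. -/
def unitY2 (q t : ℂ) : (DAHA q t)ˣ := ringQuotUnit (K := ℂ) _ _ DRel.Y2Y2i DRel.Y2iY2

theorem isDAHATuple_generators {q t : ℂ} (hq : q ≠ 0) (ht : t ≠ 0) :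
    IsDAHATuple q t (unitT q t) (unitX1 q t) (unitX2 q t) (unitY1 q t) (unitY2 q t) where
  ne_zero := hq
  hecke :=
    { ne_zero := ht
      quadratic := by
        have hrel := RingQuot.mkAlgHom_rel ℂ (DRel.hecke (q := q) (t := t))
        simp only [map_mul, map_add, map_sub, map_zero, AlgHom.commutes] at hrel
        exact hrel }
  T_mul_X₁_mul_T := Units.ext <| by
    have hrel := RingQuot.mkAlgHom_rel ℂ (DRel.TX1T (q := q) (t := t))
    simp only [map_mul] at hrel
    exact hrel
  Tinv_mul_Y₁_mul_Tinv := Units.ext <| by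
    have hrel := RingQuot.mkAlgHom_rel ℂ (DRel.TiY1Ti (q := q) (t := t))
    simp only [map_mul] at hrel
    exact hrel
  commute_X := Units.ext <| by
    have hrel := RingQuot.mkAlgHom_rel ℂ (DRel.Xcomm (q := q) (t := t))
    simp only [map_mul] at hrel
    exact hrel
  commute_Y := Units.ext <| by
    have hrel := RingQuot.mkAlgHom_rel ℂ (DRel.Ycomm (q := q) (t := t))
    simp only [map_mul] at hrel
    exact hrel
  Y₁_mul_X₁_mul_X₂ := by
    have hrel := RingQuot.mkAlgHom_rel ℂ (DRel.YXX (q := q) (t := t))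
    simp only [map_mul, map_smul] at hrel
    exact hrel
  X₁inv_mul_Y₂ := Units.ext <| by
    have hrel := RingQuot.mkAlgHom_rel ℂ (DRel.X1iY2 (q := q) (t := t))
    simp only [map_mul] at hrel
    exact hrel

end DAHAGenerators

/-- The elements `𝑃₁ = e(X₁+X₂)e`, `𝑃₂ = e(X₁X₂)e`, `𝑄₁ = e(Y₁+Y₂)e`,
`𝑄₂ = e(Y₁Y₂)e`, `𝑅 = e(t⁻²Y₁X₁+Y₂X₂)e`, together with `𝑃₂⁻¹ = e(X₁X₂)⁻¹e` and
`𝑄₂⁻¹ = e(Y₁Y₂)⁻¹e`, satisfy all the defining relations of `𝒜` (with unit `e`);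
consequently there is a ℂ-algebra homomorphism `Φ : 𝒜 → eH_{t,q}e` sending
`P₁, P₂, Q₁, Q₂, R` to `𝑃₁, 𝑃₂, 𝑄₁, 𝑄₂, 𝑅` respectively.  (As the unit of
`eH_{t,q}e` is `e`, the homomorphism is formalized as a multiplicative ℂ-linear
map into `H_{t,q}` with `Φ(1) = e`.) -/
theorem stmt6 (q t : ℂ) (hq : q ≠ 0) (ht : t ≠ 0) (ht2 : t ^ 2 ≠ -1) :
    (sP2 q t * sP2i q t = eSym q t ∧
     sP2i q t * sP2 q t = eSym q t ∧
     sQ2 q t * sQ2i q t = eSym q t ∧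
     sQ2i q t * sQ2 q t = eSym q t ∧
     sP2 q t * sP1 q t = sP1 q t * sP2 q t ∧
     sQ2 q t * sQ1 q t = sQ1 q t * sQ2 q t ∧
     sP2 q t * sQ2 q t = (q⁻¹ ^ 4) • (sQ2 q t * sP2 q t) ∧
     sP2 q t * sQ1 q t = (q⁻¹ ^ 2) • (sQ1 q t * sP2 q t) ∧
     sP1 q t * sQ2 q t = (q⁻¹ ^ 2) • (sQ2 q t * sP1 q t) ∧
     sP1 q t * sQ1 q t = sQ1 q t * sP1 q t + (q⁻¹ ^ 2 - 1) • sR q t ∧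
     sP2 q t * sR q t = (q⁻¹ ^ 2) • (sR q t * sP2 q t) ∧
     sR q t * sQ2 q t = (q⁻¹ ^ 2) • (sQ2 q t * sR q t) ∧
     sP1 q t * sR q t
       = (q⁻¹ ^ 2) • (sR q t * sP1 q t) + (1 - q⁻¹ ^ 2) • (sQ1 q t * sP2 q t) ∧
     sR q t * sQ1 q t
       = (q⁻¹ ^ 2) • (sQ1 q t * sR q t) + (1 - q⁻¹ ^ 2) • (sQ2 q t * sP1 q t) ∧
     sR q t * sR q t
       = ((1 + t ^ 2) * (q⁻¹ ^ 2 + t⁻¹ ^ 2)) • (sQ2 q t * sP2 q t)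
         - (q⁻¹ ^ 2) • (sQ2 q t * sP1 q t * sP1 q t)
         - (q⁻¹ ^ 2) • (sQ1 q t * sQ1 q t * sP2 q t)
         + (q⁻¹ ^ 2) • (sQ1 q t * sR q t * sP1 q t)) ∧
    ∃ Φ : AlgA q t →ₗ[ℂ] DAHA q t,
      (∀ x y : AlgA q t, Φ (x * y) = Φ x * Φ y) ∧
      Φ 1 = eSym q t ∧
      Φ (P1 q t) = sP1 q t ∧ Φ (P2 q t) = sP2 q t ∧ Φ (P2i q t) = sP2i q t ∧
      Φ (Q1 q t) = sQ1 q t ∧ Φ (Q2 q t) = sQ2 q t ∧ Φ (Q2i q t) = sQ2i q t ∧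
      Φ (R q t) = sR q t := by
  have ht₂ : 1 + t ^ 2 ≠ 0 := fun h => ht2 (by linear_combination h)
  have h : IsAlgATuple q t (eSym q t) (sphericalTuple t (unitT q t) (unitX1 q t) (unitX2 q t)
      (unitY1 q t) (unitY2 q t)) := (isDAHATuple_generators hq ht).isAlgATuple_sphericalTuple ht₂
  obtain ⟨Φ, hone, hgen⟩ := h.exists_nonUnitalAlgHom
  exact ⟨⟨h.P2P2i, h.P2iP2, h.Q2Q2i, h.Q2iQ2, h.P2P1, h.Q2Q1, h.P2Q2, h.P2Q1, h.P1Q2, h.P1Q1,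
      h.P2R, h.RQ2, h.P1R, h.RQ1, h.RR⟩,
    (Φ : AlgA q t →ₗ[ℂ] DAHA q t), map_mul Φ, hone, hgen .P1, hgen .P2, hgen .P2i, hgen .Q1,
    hgen .Q2, hgen .Q2i, hgen .R⟩
end
end
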